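/- arXiv:1310.6056 — 2 statements merged into one kernel-verified Lean document; each statement's English description precedes it below -/
import Mathlib

section
/- Let n be an even positive integer, let Q(x) = ∑_{1≤i≤j≤n} a_{ij} x_i x_j (a_{ij} ∈ ℤ) be a positive-definite integral quadratic form with coefficient matrix A_Q, discriminant D_Q, and level N_Q, and let P(x) be a spherical function of degree ν with respect to A_Q. Then for every positive integer m and every u ∈ ℤⁿ, the function f_{Q,P}^{u;m}(τ) = ∑_{x ∈ ℤⁿ, x ≡ u (mod m)} P(x) e^{2πi Q(x) τ} (τ in the upper half-plane) is a modular form of weight n/2 + ν for the group Γ₀(m²N_Q) ∩ Γ₁(m) with nebentypus the Kronecker symbol (D_Q/·); that is, f is holomorphic on the upper half-plane, satisfies f((aτ+b)/(cτ+d)) = (D_Q/d) (cτ+d)^{n/2+ν} f(τ) for all (a b; c d) ∈ Γ₀(m²N_Q) ∩ Γ₁(m), and is holomorphic at all cusps. Moreover, if ν ≥ 1, then f vanishes at all cusps, i.e., it is a cusp form. -/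
open Matrix UpperHalfPlane Complex Filter CongruenceSubgroup
open scoped MatrixGroups Manifold

/-- The factor of the Kronecker symbol `(a/b)` at the prime `2`. -/
def kronTwo (a : ℤ) : ℤ :=
  if 2 ∣ a then 0 else if a % 8 = 1 ∨ a % 8 = 7 then 1 else -1

/-- The Kronecker symbol `(a/b)`: completely multiplicative in `b`, with
`(a / 0) = 1` iff `a = ±1`, sign factor at `-1`, `kronTwo` at `2`, and the Jacobi
(= product of Legendre) symbol on the odd part of `b`. -/
noncomputable def kronecker (a b : ℤ) : ℤ :=
  if b = 0 then (if a = 1 ∨ a = -1 then 1 else 0)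
  else
    (if b < 0 ∧ a < 0 then -1 else 1) *
      kronTwo a ^ padicValNat 2 b.natAbs *
      jacobiSym a (b.natAbs / 2 ^ padicValNat 2 b.natAbs)

/-- The linear form `x ↦ ᵗl A x`. -/
noncomputable def sphericalLin {n : ℕ} (A : Matrix (Fin n) (Fin n) ℤ) (l : Fin n → ℂ) (x : Fin n → ℤ) : ℂ :=
  ∑ i, ∑ j, l i * (A i j : ℂ) * (x j : ℂ)

/-- A spherical function of degree `ν` with respect to `A`: a constant if `ν = 0`;
`x ↦ ᵗl A x` with `l ∈ ℂⁿ` if `ν = 1`; a finite linear combination of `x ↦ (ᵗl A x)^ν`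
with `ᵗl A l = 0` if `ν > 1`. -/
def IsSpherical {n : ℕ} (A : Matrix (Fin n) (Fin n) ℤ) (ν : ℕ) (P : (Fin n → ℤ) → ℂ) : Prop :=
  (ν = 0 ∧ ∃ c : ℂ, P = fun _ => c) ∨
  (ν = 1 ∧ ∃ l : Fin n → ℂ, P = fun x => sphericalLin A l x) ∨
  (1 < ν ∧ ∃ (k : ℕ) (c : Fin k → ℂ) (l : Fin k → Fin n → ℂ),
      (∀ t, ∑ i, ∑ j, l t i * (A i j : ℂ) * l t j = 0) ∧
      P = fun x => ∑ t, c t * sphericalLin A (l t) x ^ ν)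

/- One-variable Poisson summation, iterated by completing the square, relates a translated Gaussian
sum to a twisted dual one. Expanding in a translation along an isotropic vector inserts spherical
functions on both sides, so the theta series of a coset at `-1/τ` is a theta series of the form `R`
with Gram matrix `N A⁻¹`. Splitting cosets modulo `d`, a substitution with lower right entry `d > 0`
likewise leads to `R` with an additional Gauss sum, and Poisson summation back to `Q` gives the
transformation law with the multiplier `G(b, d) / d^(n/2)`, where `G(b, d)` is the sum of
`e(b Q(s) / d)` over `s` modulo `d`.

Replacing `τ` by `τ - j` replaces `d` by `d + j c`, which Dirichlet's theorem allows to be an odd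
prime; there diagonalizing `Q` evaluates the multiplier as a Legendre symbol of the discriminant
`D`. To identify it with the Kronecker symbol at `d` by quadratic reciprocity one needs
`D ≡ 1 mod 4` when `N` is odd, which follows because the multiplier at `d = 1` is trivial. At each
cusp the same summation formula exhibits the limit as a multiple of the constant term of the theta
series or of its dual, and both vanish for `ν ≥ 1`. -/

open scoped Real

section SchurComplement

variable {K : Type*} [Field K] {n : ℕ}

/-- The first row of a matrix, without its first entry. -/
def firstRow (M : Matrix (Fin (n + 1)) (Fin (n + 1)) K) : Fin n → K := fun j => M 0 j.succ

/-- The Schur complement of the upper left entry `M 0 0` of a symmetric matrix `M`; it is the form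
that remains after completing the square in the first variable. -/
def schur (M : Matrix (Fin (n + 1)) (Fin (n + 1)) K) : Matrix (Fin n) (Fin n) K :=
  M.submatrix Fin.succ Fin.succ - (M 0 0)⁻¹ • vecMulVec (firstRow M) (firstRow M)

theorem isSymm_schur {M : Matrix (Fin (n + 1)) (Fin (n + 1)) K} (hM : M.IsSymm) :
    (schur M).IsSymm := by
  ext i j
  simp [schur, vecMulVec_apply, hM.apply, mul_comm]

theorem mulVec_cons_eq_schur {M : Matrix (Fin (n + 1)) (Fin (n + 1)) K} (hM : M.IsSymm)
    (h0 : M 0 0 ≠ 0) (x : K) (v : Fin n → K) :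
    M *ᵥ vecCons x v =
      vecCons (M 0 0 * (x + (firstRow M ⬝ᵥ v) / M 0 0))
        (schur M *ᵥ v + (x + (firstRow M ⬝ᵥ v) / M 0 0) • firstRow M) := by
  ext i
  refine Fin.cases ?_ (fun i => ?_) i
  · simp only [mulVec, dotProduct, Fin.sum_univ_succ, cons_val_zero, cons_val_succ, firstRow]
    field_simp
  · have hrow : (schur M *ᵥ v) i =
        (M.submatrix Fin.succ Fin.succ *ᵥ v) i -
          (M 0 0)⁻¹ * (firstRow M i * (firstRow M ⬝ᵥ v)) := by
      simp [schur, sub_mulVec, smul_mulVec, vecMulVec_mulVec, mul_comm]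
    have hsplit : (M *ᵥ vecCons x v) i.succ =
        firstRow M i * x + (M.submatrix Fin.succ Fin.succ *ᵥ v) i := by
      simp [mulVec, dotProduct, Fin.sum_univ_succ, firstRow, hM.apply]
    rw [hsplit, cons_val_succ, Pi.add_apply, Pi.smul_apply, hrow, smul_eq_mul]
    field_simp
    ring

theorem form_cons_eq_schur {M : Matrix (Fin (n + 1)) (Fin (n + 1)) K} (hM : M.IsSymm)
    (h0 : M 0 0 ≠ 0) (x : K) (v : Fin n → K) :
    vecCons x v ⬝ᵥ M *ᵥ vecCons x v =
      M 0 0 * (x + (firstRow M ⬝ᵥ v) / M 0 0) ^ 2 + v ⬝ᵥ schur M *ᵥ v := by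
  rw [mulVec_cons_eq_schur hM h0, cons_dotProduct_cons, dotProduct_add, dotProduct_smul,
    dotProduct_comm v (firstRow M), smul_eq_mul]
  field_simp
  ring

theorem det_eq_mul_det_schur {M : Matrix (Fin (n + 1)) (Fin (n + 1)) K} (hM : M.IsSymm)
    (h0 : M 0 0 ≠ 0) : M.det = M 0 0 * (schur M).det := by
  set B : Matrix (Fin (n + 1)) (Fin (n + 1)) K :=
    of (vecCons (M 0) fun i => vecCons 0 (schur M i)) with hB
  have hdet : M.det = B.det := by
    refine det_eq_of_forall_row_eq_smul_add_const
      (vecCons 0 ((M 0 0)⁻¹ • firstRow M)) 0 rfl fun i j => ?_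
    refine Fin.cases (by simp [hB]) (fun i => ?_) i
    refine Fin.cases ?_ (fun j => ?_) j
    · simp [hB, firstRow, h0, hM.apply, mul_comm]
    · simp [hB, schur, firstRow, vecMulVec_apply]
      ring
  have hminor : B.submatrix (Fin.succAbove 0) Fin.succ = schur M := by ext; simp [hB]
  rw [hdet, det_succ_column_zero, Fin.sum_univ_succ, Finset.sum_eq_zero fun i _ => by simp [hB],
    hminor]
  simp [hB]

theorem form_inv_cons_eq_schur {M : Matrix (Fin (n + 1)) (Fin (n + 1)) K} (hM : M.IsSymm)
    (h0 : M 0 0 ≠ 0) (hdet : M.det ≠ 0) (y : K) (v : Fin n → K) :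
    vecCons y v ⬝ᵥ M⁻¹ *ᵥ vecCons y v =
      y ^ 2 / M 0 0 + (v - (y / M 0 0) • firstRow M) ⬝ᵥ
        (schur M)⁻¹ *ᵥ (v - (y / M 0 0) • firstRow M) := by
  set v' := (schur M)⁻¹ *ᵥ (v - (y / M 0 0) • firstRow M) with hv'
  have hschur : IsUnit (schur M).det :=
    IsUnit.mk0 _ (right_ne_zero_of_mul (det_eq_mul_det_schur hM h0 ▸ hdet))
  have hsolve : M *ᵥ vecCons (y / M 0 0 - (firstRow M ⬝ᵥ v') / M 0 0) v' =
      vecCons y v := by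
    rw [mulVec_cons_eq_schur hM h0, sub_add_cancel, mul_div_cancel₀ _ h0, hv', mulVec_mulVec,
      mul_nonsing_inv _ hschur, one_mulVec, sub_add_cancel]
  rw [← hsolve, mulVec_mulVec, nonsing_inv_mul _ (IsUnit.mk0 _ hdet), one_mulVec, hsolve,
    cons_dotProduct_cons, sub_dotProduct, smul_dotProduct, smul_eq_mul]
  ring

end SchurComplement

section GaussianDecay

variable {n : ℕ}

/-- At most exponential growth of a function on the lattice `ℤⁿ`. -/
def HasExpGrowth (p : (Fin n → ℤ) → ℂ) : Prop := ∃ c K : ℝ, ∀ x, ‖p x‖ ≤ c * Real.exp (K * ‖x‖)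

/-- Decay of a function on the lattice `ℤⁿ` at least as fast as some Gaussian. -/
def HasGaussianDecay (F : (Fin n → ℤ) → ℂ) : Prop :=
  ∃ δ > 0, ∃ c : ℝ, ∀ x, ‖F x‖ ≤ c * Real.exp (-δ * ‖x‖ ^ 2)

theorem HasExpGrowth.mul {p q : (Fin n → ℤ) → ℂ} (hp : HasExpGrowth p) (hq : HasExpGrowth q) :
    HasExpGrowth fun x => p x * q x := by
  obtain ⟨c, K, hp⟩ := hp
  obtain ⟨c', K', hq⟩ := hq
  refine ⟨c * c', K + K', fun x => ?_⟩
  calc ‖p x * q x‖ ≤ (c * Real.exp (K * ‖x‖)) * (c' * Real.exp (K' * ‖x‖)) := by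
        rw [norm_mul]
        exact mul_le_mul (hp x) (hq x) (norm_nonneg _) ((norm_nonneg _).trans (hp x))
    _ = _ := by rw [add_mul, Real.exp_add]; ring

theorem HasExpGrowth.const_mul {p : (Fin n → ℤ) → ℂ} (hp : HasExpGrowth p) (a : ℂ) :
    HasExpGrowth fun x => a * p x := by
  obtain ⟨c, K, hp⟩ := hp
  refine ⟨‖a‖ * c, K, fun x => ?_⟩
  rw [norm_mul, mul_assoc]
  gcongr
  exact hp x

theorem HasExpGrowth.of_norm_le {p : (Fin n → ℤ) → ℂ} {c : ℝ} (hp : ∀ x, ‖p x‖ ≤ c) :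
    HasExpGrowth p :=
  ⟨c, 0, fun x => by simpa using hp x⟩

theorem HasExpGrowth.sum {ι : Type*} (s : Finset ι) {p : ι → (Fin n → ℤ) → ℂ}
    (hp : ∀ i, HasExpGrowth (p i)) : HasExpGrowth fun x => ∑ i ∈ s, p i x := by
  choose c K hp using hp
  have hc : ∀ i, 0 ≤ c i := fun i =>
    nonneg_of_mul_nonneg_left ((norm_nonneg _).trans (hp i 0)) (Real.exp_pos _)
  refine ⟨∑ i ∈ s, c i, ∑ i ∈ s, |K i|, fun x => ?_⟩
  rw [Finset.sum_mul]
  refine (norm_sum_le _ _).trans (Finset.sum_le_sum fun i hi => (hp i x).trans ?_)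
  gcongr
  · exact hc i
  · exact (le_abs_self _).trans (Finset.single_le_sum (fun j _ => abs_nonneg (K j)) hi)

/-- An integral vector as a complex vector. -/
def toComplex (x : Fin n → ℤ) : Fin n → ℂ := fun i => x i

/-- An integral vector as a real vector. -/
def toReal (x : Fin n → ℤ) : Fin n → ℝ := fun i => x i

theorem norm_toReal (x : Fin n → ℤ) : ‖toReal x‖ = ‖x‖ := by
  have h : ∀ k : ℤ, ‖(k : ℝ)‖₊ = ‖k‖₊ := fun k => NNReal.eq (Int.norm_cast_real k)
  simp only [Pi.norm_def, toReal, h]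

theorem norm_dotProduct_toComplex_le (l : Fin n → ℂ) (x : Fin n → ℤ) :
    ‖l ⬝ᵥ toComplex x‖ ≤ (∑ i, ‖l i‖) * ‖x‖ := by
  rw [dotProduct, Finset.sum_mul]
  refine norm_sum_le_of_le _ fun i _ => ?_
  rw [norm_mul, toComplex, Complex.norm_intCast, ← Int.norm_eq_abs]
  gcongr
  exact norm_le_pi_norm x i

theorem hasExpGrowth_exp_linear (l : Fin n → ℂ) (c : ℂ) :
    HasExpGrowth fun x => cexp (l ⬝ᵥ toComplex x + c) := by
  refine ⟨Real.exp ‖c‖, ∑ i, ‖l i‖, fun x => ?_⟩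
  rw [Complex.norm_exp, ← Real.exp_add, Real.exp_le_exp, add_comm ‖c‖]
  exact (re_le_norm _).trans <| (norm_add_le _ _).trans <| by
    gcongr; exact norm_dotProduct_toComplex_le l x

theorem hasExpGrowth_linear_pow (l : Fin n → ℂ) (c : ℂ) (ν : ℕ) :
    HasExpGrowth fun x => (l ⬝ᵥ toComplex x + c) ^ ν := by
  refine ⟨ν.factorial * Real.exp ‖c‖, ∑ i, ‖l i‖, fun x => ?_⟩
  have hlin : ‖l ⬝ᵥ toComplex x + c‖ ≤ ‖c‖ + (∑ i, ‖l i‖) * ‖x‖ := by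
    rw [add_comm ‖c‖]
    exact (norm_add_le _ _).trans (by gcongr; exact norm_dotProduct_toComplex_le l x)
  have hpow := Real.pow_div_factorial_le_exp _ (norm_nonneg (l ⬝ᵥ toComplex x + c)) ν
  rw [div_le_iff₀' (by positivity)] at hpow
  rw [norm_pow, mul_assoc, ← Real.exp_add]
  exact hpow.trans (by gcongr)

theorem HasExpGrowth.mul_hasGaussianDecay {p F : (Fin n → ℤ) → ℂ} (hp : HasExpGrowth p)
    (hF : HasGaussianDecay F) : HasGaussianDecay fun x => p x * F x := by
  obtain ⟨c, K, hp⟩ := hp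
  obtain ⟨δ, hδ, c', hF⟩ := hF
  have hc : 0 ≤ c := nonneg_of_mul_nonneg_left ((norm_nonneg _).trans (hp 0)) (Real.exp_pos _)
  have hc' : 0 ≤ c' := nonneg_of_mul_nonneg_left ((norm_nonneg _).trans (hF 0)) (Real.exp_pos _)
  refine ⟨δ / 2, half_pos hδ, c * c' * Real.exp (K ^ 2 / (2 * δ)), fun x => ?_⟩
  have hsq : K * ‖x‖ + -δ * ‖x‖ ^ 2 ≤ K ^ 2 / (2 * δ) + -(δ / 2) * ‖x‖ ^ 2 := by
    have h : K ^ 2 / (2 * δ) + -(δ / 2) * ‖x‖ ^ 2 - (K * ‖x‖ + -δ * ‖x‖ ^ 2) =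
        (K - δ * ‖x‖) ^ 2 / (2 * δ) := by field_simp; ring
    linarith [show 0 ≤ (K - δ * ‖x‖) ^ 2 / (2 * δ) by positivity]
  calc ‖p x * F x‖ ≤ (c * Real.exp (K * ‖x‖)) * (c' * Real.exp (-δ * ‖x‖ ^ 2)) := by
        rw [norm_mul]
        exact mul_le_mul (hp x) (hF x) (norm_nonneg _) ((norm_nonneg _).trans (hp x))
    _ = c * c' * Real.exp (K * ‖x‖ + -δ * ‖x‖ ^ 2) := by rw [Real.exp_add]; ring
    _ ≤ c * c' * Real.exp (K ^ 2 / (2 * δ) + -(δ / 2) * ‖x‖ ^ 2) := by gcongr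
    _ = _ := by rw [Real.exp_add]; ring

theorem summable_exp_quadratic_int {s : ℂ} (hs : 0 < s.re) (L c : ℂ) :
    Summable fun k : ℤ => cexp (-π * s * (k : ℂ) ^ 2 + L * k + c) := by
  have h := (summable_jacobiTheta₂_term_iff (L / (2 * π * Complex.I)) (Complex.I * s)).2
    (by simpa using hs)
  refine (h.mul_right (cexp c)).congr fun k => ?_
  rw [jacobiTheta₂_term, ← Complex.exp_add]
  congr 1
  have : (π : ℂ) ≠ 0 := ofReal_ne_zero.2 Real.pi_ne_zero
  field_simp
  linear_combination (π * (k : ℂ) ^ 2 * s : ℂ) * Complex.I_sq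

theorem summable_exp_neg_mul_sq_int {δ : ℝ} (hδ : 0 < δ) :
    Summable fun k : ℤ => Real.exp (-δ * (k : ℝ) ^ 2) := by
  have hs : 0 < ((δ / π : ℝ) : ℂ).re := by simpa using div_pos hδ Real.pi_pos
  refine (summable_exp_quadratic_int hs 0 0).norm.congr fun k => ?_
  rw [Complex.norm_exp, show -π * ((δ / π : ℝ) : ℂ) * (k : ℂ) ^ 2 + 0 * k + 0 =
    ((-π * (δ / π) * (k : ℝ) ^ 2 : ℝ) : ℂ) by push_cast; ring, ofReal_re]
  field_simp

theorem summable_prod_apply : ∀ {n : ℕ} {f : ℤ → ℝ}, (∀ k, 0 ≤ f k) → Summable f →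
    Summable fun x : Fin n → ℤ => ∏ i, f (x i)
  | 0, _, _, _ => (hasSum_fintype _).summable
  | n + 1, f, h0, hf => by
    rw [← (Fin.consEquiv fun _ : Fin (n + 1) => ℤ).summable_iff]
    refine (hf.mul_of_nonneg (summable_prod_apply h0 hf) h0 fun x =>
      Finset.prod_nonneg fun i _ => h0 _).congr fun p => ?_
    simp [Fin.prod_univ_succ, Fin.consEquiv]

theorem HasGaussianDecay.summable {F : (Fin n → ℤ) → ℂ} (hF : HasGaussianDecay F) :
    Summable F := by
  obtain ⟨δ, hδ, c, hF⟩ := hF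
  have hδn : 0 < δ / (n + 1) := by positivity
  refine Summable.of_norm_bounded (((summable_prod_apply (n := n)
    (fun _ => (Real.exp_pos _).le) (summable_exp_neg_mul_sq_int hδn)).mul_left c)) fun x => ?_
  have hc : 0 ≤ c := nonneg_of_mul_nonneg_left ((norm_nonneg _).trans (hF 0)) (Real.exp_pos _)
  have hsum : ∑ i, (x i : ℝ) ^ 2 ≤ (n + 1) * ‖x‖ ^ 2 := by
    calc ∑ i, (x i : ℝ) ^ 2 ≤ ∑ _i : Fin n, ‖x‖ ^ 2 := Finset.sum_le_sum fun i _ => by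
          rw [← sq_abs, ← Int.norm_eq_abs]
          gcongr
          exact norm_le_pi_norm x i
      _ ≤ (n + 1) * ‖x‖ ^ 2 := by
          rw [Finset.sum_const, Finset.card_univ, Fintype.card_fin, nsmul_eq_mul]
          gcongr
          linarith
  refine (hF x).trans ?_
  rw [← Real.exp_sum, ← Finset.mul_sum]
  refine mul_le_mul_of_nonneg_left (Real.exp_le_exp.2 ?_) hc
  calc -δ * ‖x‖ ^ 2 = -(δ / (n + 1)) * ((n + 1) * ‖x‖ ^ 2) := by field_simp
    _ ≤ -(δ / (n + 1)) * ∑ i, (x i : ℝ) ^ 2 := mul_le_mul_of_nonpos_left hsum (by linarith)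

theorem exists_mul_sq_norm_le_form {M : Matrix (Fin n) (Fin n) ℝ} (hM : M.PosDef) :
    ∃ ε > 0, ∀ x : Fin n → ℝ, ε * ‖x‖ ^ 2 ≤ x ⬝ᵥ M *ᵥ x := by
  have hcont : Continuous fun x : Fin n → ℝ => x ⬝ᵥ M *ᵥ x := by
    simp only [dotProduct, mulVec]
    fun_prop
  obtain ⟨ε, hε, hbound⟩ : ∃ ε > 0, ∀ x ∈ Metric.sphere (0 : Fin n → ℝ) 1, ε ≤ x ⬝ᵥ M *ᵥ x := by
    rcases (Metric.sphere (0 : Fin n → ℝ) 1).eq_empty_or_nonempty with he | hne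
    · exact ⟨1, one_pos, by simp [he]⟩
    · obtain ⟨x₀, hx₀, hmin⟩ := (isCompact_sphere _ _).exists_isMinOn hne hcont.continuousOn
      exact ⟨_, hM.dotProduct_mulVec_pos (Metric.ne_of_mem_sphere hx₀ one_ne_zero),
        fun x hx => hmin hx⟩
  refine ⟨ε, hε, fun x => ?_⟩
  rcases eq_or_ne x 0 with rfl | hx
  · simp
  have hr : 0 < ‖x‖ := norm_pos_iff.2 hx
  have h := hbound (‖x‖⁻¹ • x) (by simp [norm_smul, hr.ne'])
  rw [mulVec_smul, dotProduct_smul, smul_dotProduct, smul_eq_mul, smul_eq_mul] at h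
  calc ε * ‖x‖ ^ 2 ≤ (‖x‖⁻¹ * (‖x‖⁻¹ * (x ⬝ᵥ M *ᵥ x))) * ‖x‖ ^ 2 := by gcongr
    _ = x ⬝ᵥ M *ᵥ x := by field_simp

theorem hasGaussianDecay_exp_form {M : Matrix (Fin n) (Fin n) ℝ} (hM : M.PosDef) {t : ℂ}
    (ht : 0 < t.re) :
    HasGaussianDecay fun x => cexp (-π * t * (toReal x ⬝ᵥ M *ᵥ toReal x : ℝ)) := by
  obtain ⟨ε, hε, hbound⟩ := exists_mul_sq_norm_le_form hM
  refine ⟨π * t.re * ε, by positivity, 1, fun x => ?_⟩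
  rw [Complex.norm_exp, one_mul, Real.exp_le_exp, Complex.re_mul_ofReal, ← norm_toReal]
  have h := mul_le_mul_of_nonneg_left (hbound (toReal x)) (mul_pos Real.pi_pos ht).le
  simp only [neg_mul, neg_re, re_ofReal_mul]
  linarith

end GaussianDecay

section PoissonSummation

variable {n : ℕ}

/-- The Gaussian with form `t • M`, translated by `b` and twisted by the character `w`, at a
lattice point; these are the terms on both sides of Poisson summation. -/
noncomputable def gaussTerm (M : Matrix (Fin n) (Fin n) ℝ) (t : ℂ) (b w : Fin n → ℂ)
    (x : Fin n → ℤ) : ℂ :=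
  cexp (-π * t * ((toComplex x + b) ⬝ᵥ M.map ofReal *ᵥ (toComplex x + b)) +
    2 * π * Complex.I * (w ⬝ᵥ toComplex x))

theorem dotProduct_mulVec_comm {R : Type*} [CommRing R] {M : Matrix (Fin n) (Fin n) R}
    (hM : M.IsSymm) (x y : Fin n → R) : x ⬝ᵥ M *ᵥ y = y ⬝ᵥ M *ᵥ x := by
  rw [dotProduct_mulVec, ← mulVec_transpose, hM, dotProduct_comm]

theorem form_add {R : Type*} [CommRing R] {M : Matrix (Fin n) (Fin n) R} (hM : M.IsSymm)
    (x y : Fin n → R) : (x + y) ⬝ᵥ M *ᵥ (x + y) =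
      x ⬝ᵥ M *ᵥ x + 2 * (y ⬝ᵥ M *ᵥ x) + y ⬝ᵥ M *ᵥ y := by
  simp only [mulVec_add, add_dotProduct, dotProduct_add]
  rw [dotProduct_mulVec_comm hM x y]
  ring

theorem isSymm_of_posDef {M : Matrix (Fin n) (Fin n) ℝ} (hM : M.PosDef) : M.IsSymm :=
  isHermitian_iff_isSymm.1 hM.isHermitian

theorem map_ofReal_inv {M : Matrix (Fin n) (Fin n) ℝ} (hM : M.PosDef) :
    M⁻¹.map ofReal = (M.map ofReal)⁻¹ := by
  refine (inv_eq_right_inv ?_).symm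
  have h := congrArg (ofRealHom.mapMatrix : Matrix (Fin n) (Fin n) ℝ →+* _)
    (mul_nonsing_inv M hM.det_pos.ne'.isUnit)
  rwa [map_mul, map_one] at h

theorem hasGaussianDecay_gaussTerm {M : Matrix (Fin n) (Fin n) ℝ} (hM : M.PosDef) {t : ℂ}
    (ht : 0 < t.re) (b w : Fin n → ℂ) : HasGaussianDecay (gaussTerm M t b w) := by
  have hs : (M.map ofReal).IsSymm := (isSymm_of_posDef hM).map _
  convert (hasExpGrowth_exp_linear
    ((-2 * π * t) • (M.map ofReal *ᵥ b) + (2 * π * Complex.I) • w)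
    (-π * t * (b ⬝ᵥ M.map ofReal *ᵥ b))).mul_hasGaussianDecay (hasGaussianDecay_exp_form hM ht)
    using 2 with x
  have hreal : toComplex x ⬝ᵥ M.map ofReal *ᵥ toComplex x = (toReal x ⬝ᵥ M *ᵥ toReal x : ℝ) := by
    simp [toComplex, toReal, dotProduct, mulVec]
  rw [gaussTerm, form_add hs, hreal, ← Complex.exp_add]
  congr 1
  simp only [add_dotProduct, smul_dotProduct, smul_eq_mul]
  rw [dotProduct_comm (M.map ofReal *ᵥ b), dotProduct_mulVec_comm hs b]
  ring

theorem tsum_exp_quadratic_int {t : ℂ} (ht : 0 < t.re) (b w : ℂ) :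
    ∑' k : ℤ, cexp (-π * t * ((k : ℂ) + b) ^ 2 + 2 * π * Complex.I * (w * k)) =
      1 / t ^ (1 / 2 : ℂ) * ∑' k : ℤ, cexp (-π / t * ((k : ℂ) - w) ^ 2 +
        2 * π * Complex.I * (b * (k - w))) := by
  have ht0 : t ≠ 0 := fun h => by simp [h] at ht
  have h := Complex.tsum_exp_neg_quadratic ht (-t * b + Complex.I * w)
  have hl : ∀ k : ℤ, cexp (-π * t * ((k : ℂ) + b) ^ 2 + 2 * π * Complex.I * (w * k)) =
      cexp (-π * t * b ^ 2) *
        cexp (-π * t * (k : ℂ) ^ 2 + 2 * π * (-t * b + Complex.I * w) * k) := fun k => by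
    rw [← Complex.exp_add]
    congr 1
    ring
  have hr : ∀ k : ℤ, cexp (-π / t * ((k : ℂ) - w) ^ 2 + 2 * π * Complex.I * (b * (k - w))) =
      cexp (-π * t * b ^ 2) *
        cexp (-π / t * ((k : ℂ) + Complex.I * (-t * b + Complex.I * w)) ^ 2) := fun k => by
    rw [← Complex.exp_add]
    congr 1
    have : (k : ℂ) + Complex.I * (-t * b + Complex.I * w) = k - w - Complex.I * t * b := by
      linear_combination w * Complex.I_sq
    rw [this]
    field_simp
    linear_combination (t ^ 2 * b ^ 2 : ℂ) * Complex.I_sq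
  simp only [hl, hr, tsum_mul_left]
  rw [h]
  ring

theorem schur_map_ofReal (M : Matrix (Fin (n + 1)) (Fin (n + 1)) ℝ) :
    schur (M.map ofReal) = (schur M).map ofReal := by
  ext i j
  simp [schur, firstRow, vecMulVec_apply]

theorem posDef_schur {M : Matrix (Fin (n + 1)) (Fin (n + 1)) ℝ} (hM : M.PosDef) :
    (schur M).PosDef := by
  have hs := isSymm_of_posDef hM
  refine .of_dotProduct_mulVec_pos (isHermitian_iff_isSymm.2 (isSymm_schur hs)) fun x hx => ?_
  have h := hM.dotProduct_mulVec_pos (x := vecCons (-((firstRow M ⬝ᵥ x) / M 0 0)) x)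
    fun h => hx (funext fun i => congrFun h i.succ)
  simpa only [star_trivial, form_cons_eq_schur hs hM.diag_pos.ne', neg_add_cancel, ne_eq,
    OfNat.ofNat_ne_zero, not_false_eq_true, zero_pow, mul_zero, zero_add] using h

theorem mul_ofReal_cpow {t : ℂ} (ht : 0 < t.re) {a : ℝ} (ha : 0 < a) (s : ℂ) :
    (t * a) ^ s = t ^ s * (a : ℂ) ^ s := by
  have ht0 : t ≠ 0 := fun h => by simp [h] at ht
  have ha0 : (a : ℂ) ≠ 0 := ofReal_ne_zero.2 ha.ne'
  rw [cpow_def_of_ne_zero (mul_ne_zero ht0 ha0), cpow_def_of_ne_zero ht0, cpow_def_of_ne_zero ha0,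
    ← Complex.exp_add, Complex.log_mul_ofReal _ ha _ ht0, Complex.ofReal_log ha.le]
  ring_nf

variable {M : Matrix (Fin (n + 1)) (Fin (n + 1)) ℝ} {t : ℂ}

theorem gaussTerm_cons (hM : M.PosDef) (b w : Fin (n + 1) → ℂ) (k : ℤ) (x : Fin n → ℤ) :
    gaussTerm M t b w (vecCons k x) =
      cexp (-π * (t * M 0 0) * ((k : ℂ) + (b 0 + firstRow (M.map ofReal) ⬝ᵥ
          (toComplex x + vecTail b) / M 0 0)) ^ 2 + 2 * π * Complex.I * (w 0 * k)) *
        gaussTerm (schur M) t (vecTail b) (vecTail w) x := by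
  have hcons : toComplex (vecCons k x) + b = vecCons (k + b 0) (toComplex x + vecTail b) := by
    ext i
    refine Fin.cases ?_ (fun i => ?_) i <;> simp [toComplex, vecTail]
  have hw : w ⬝ᵥ toComplex (vecCons k x) = w 0 * k + vecTail w ⬝ᵥ toComplex x := by
    simp [dotProduct, Fin.sum_univ_succ, toComplex, vecTail]
  have h0 : M.map ofReal 0 0 ≠ 0 := by simpa using hM.diag_pos.ne'
  rw [gaussTerm, gaussTerm, hcons, hw, form_cons_eq_schur ((isSymm_of_posDef hM).map _) h0,
    schur_map_ofReal, map_apply, ← Complex.exp_add]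
  ring_nf

theorem gaussTerm_inv_cons (hM : M.PosDef) (b w : Fin (n + 1) → ℂ) (k : ℤ) (y : Fin n → ℤ) :
    gaussTerm M⁻¹ (1 / t) (-w) b (vecCons k y) =
      cexp (-π / (t * M 0 0) * ((k : ℂ) - w 0) ^ 2 + 2 * π * Complex.I * (b 0 * k)) *
        gaussTerm (schur M)⁻¹ (1 / t)
          (-(vecTail w + (((k : ℂ) - w 0) / M 0 0) • firstRow (M.map ofReal))) (vecTail b) y := by
  have hcons : toComplex (vecCons k y) + -w = vecCons (k - w 0) (toComplex y - vecTail w) := by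
    ext i
    refine Fin.cases ?_ (fun i => ?_) i <;> simp [toComplex, vecTail, sub_eq_add_neg]
  have hb : b ⬝ᵥ toComplex (vecCons k y) = b 0 * k + vecTail b ⬝ᵥ toComplex y := by
    simp [dotProduct, Fin.sum_univ_succ, toComplex, vecTail]
  have h0 : M.map ofReal 0 0 ≠ 0 := by simpa using hM.diag_pos.ne'
  have hdet : (M.map ofReal).det ≠ 0 :=
    (ofRealHom.map_det M).symm.trans_ne (ofReal_ne_zero.2 hM.det_pos.ne')
  have hshift : ∀ v u : Fin n → ℂ, toComplex y + -(v + u) = toComplex y - v - u := fun v u => by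
    abel
  rw [gaussTerm, gaussTerm, hcons, hb, map_ofReal_inv hM, map_ofReal_inv (posDef_schur hM),
    form_inv_cons_eq_schur ((isSymm_of_posDef hM).map _) h0 hdet, schur_map_ofReal, map_apply,
    ← Complex.exp_add, hshift]
  congr 1
  field_simp
  ring

/-- The terms of the double series obtained from the Gaussian series of `M` by Poisson summation
over the first coordinate. -/
noncomputable def mixedTerm (M : Matrix (Fin (n + 1)) (Fin (n + 1)) ℝ) (t : ℂ)
    (b w : Fin (n + 1) → ℂ) (k : ℤ) (x : Fin n → ℤ) : ℂ :=
  cexp (-π / (t * M 0 0) * ((k : ℂ) - w 0) ^ 2 +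
      2 * π * Complex.I * ((b 0 + firstRow (M.map ofReal) ⬝ᵥ vecTail b / M 0 0) * (k - w 0))) *
    gaussTerm (schur M) t (vecTail b)
      (vecTail w + (((k : ℂ) - w 0) / M 0 0) • firstRow (M.map ofReal)) x

theorem tsum_gaussTerm_cons (hM : M.PosDef) (ht : 0 < t.re) (b w : Fin (n + 1) → ℂ)
    (x : Fin n → ℤ) :
    ∑' k : ℤ, gaussTerm M t b w (vecCons k x) =
      1 / (t * M 0 0) ^ (1 / 2 : ℂ) * ∑' k : ℤ, mixedTerm M t b w k x := by
  have hta : 0 < (t * M 0 0).re := by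
    rw [Complex.re_mul_ofReal]
    exact mul_pos ht hM.diag_pos
  simp only [gaussTerm_cons hM]
  rw [tsum_mul_right, tsum_exp_quadratic_int hta, mul_assoc, ← tsum_mul_right]
  congr 1
  refine tsum_congr fun k => ?_
  simp only [mixedTerm, gaussTerm, ← Complex.exp_add, add_dotProduct, smul_dotProduct,
    dotProduct_add, smul_eq_mul]
  ring_nf

theorem one_div_re_pos {t : ℂ} (ht : 0 < t.re) : 0 < (1 / t).re := by
  rw [one_div, inv_re]
  exact div_pos ht (normSq_pos.2 fun h => by simp [h] at ht)

theorem summable_mixedTerm (hM : M.PosDef) (ht : 0 < t.re) (b w : Fin (n + 1) → ℂ) :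
    Summable fun p : ℤ × (Fin n → ℤ) => mixedTerm M t b w p.1 p.2 := by
  set β := b 0 + firstRow (M.map ofReal) ⬝ᵥ vecTail b / M 0 0 with hβ
  set r := firstRow (M.map ofReal) with hr
  have ha : 0 < (1 / (t * M 0 0)).re := by
    refine one_div_re_pos ?_
    rw [Complex.re_mul_ofReal]
    exact mul_pos ht hM.diag_pos
  have hk := (summable_exp_quadratic_int ha
    (2 * π / (t * M 0 0) * w 0 + 2 * π * Complex.I * β)
    (-π / (t * M 0 0) * w 0 ^ 2 - 2 * π * Complex.I * β * w 0)).norm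
  have hx := (hasGaussianDecay_gaussTerm (posDef_schur hM) ht (vecTail b)
    (vecTail w - (w 0 / M 0 0) • r)).summable.norm
  refine .of_norm ((hk.mul_of_nonneg hx (fun _ => norm_nonneg _) fun _ => norm_nonneg _).congr ?_)
  rintro ⟨k, x⟩
  -- the first coordinate is coupled to the others only through a phase of absolute value one
  have hphase : ‖cexp ((2 * π * (k / M 0 0 * (firstRow M ⬝ᵥ toReal x)) : ℝ) * Complex.I)‖ = 1 :=
    Complex.norm_exp_ofReal_mul_I _
  have hrow : ((firstRow M ⬝ᵥ toReal x : ℝ) : ℂ) = r ⬝ᵥ toComplex x := by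
    simp [hr, firstRow, dotProduct, toReal, toComplex]
  rw [← norm_mul, ← mul_one ‖_ * _‖, ← hphase, ← norm_mul, mixedTerm, ← hr, ← hβ]
  congr 1
  simp only [gaussTerm, ← Complex.exp_add, add_dotProduct, sub_dotProduct, smul_dotProduct,
    smul_eq_mul, ofReal_mul, ofReal_div, hrow]
  push_cast
  ring_nf

theorem tsum_mixedTerm_eq {C : ℂ} (hM : M.PosDef) (b w : Fin (n + 1) → ℂ)
    (hC : ∀ b w : Fin n → ℂ, ∑' x, gaussTerm (schur M) t b w x =
      cexp (-(2 * π * Complex.I * (b ⬝ᵥ w))) * C *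
        ∑' y, gaussTerm (schur M)⁻¹ (1 / t) (-w) b y) (k : ℤ) :
    ∑' x, mixedTerm M t b w k x = cexp (-(2 * π * Complex.I * (b ⬝ᵥ w))) * C *
      ∑' y, gaussTerm M⁻¹ (1 / t) (-w) b (vecCons k y) := by
  have hbw : b ⬝ᵥ w = b 0 * w 0 + vecTail b ⬝ᵥ vecTail w := by
    simp [dotProduct, Fin.sum_univ_succ, vecTail]
  simp only [mixedTerm, gaussTerm_inv_cons hM, tsum_mul_left, hC]
  have hregroup : ∀ {e₁ e₂ e₃ e₄ : ℂ} (S : ℂ), e₁ * e₂ = e₃ * e₄ →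
      e₁ * (e₂ * C * S) = e₃ * C * (e₄ * S) := fun S h => by linear_combination (C * S) * h
  refine hregroup _ ?_
  rw [hbw, ← Complex.exp_add, ← Complex.exp_add]
  congr 1
  rw [dotProduct_add, dotProduct_smul, smul_eq_mul, dotProduct_comm (vecTail b) (firstRow _)]
  ring

theorem tsum_eq_tsum_vecCons (F : (Fin (n + 1) → ℤ) → ℂ) :
    ∑' x, F x = ∑' p : ℤ × (Fin n → ℤ), F (vecCons p.1 p.2) :=
  ((Fin.consEquiv fun _ : Fin (n + 1) => ℤ).tsum_eq F).symm

theorem summable_vecCons {F : (Fin (n + 1) → ℤ) → ℂ} (hF : Summable F) :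
    Summable fun p : ℤ × (Fin n → ℤ) => F (vecCons p.1 p.2) :=
  (Fin.consEquiv fun _ : Fin (n + 1) => ℤ).summable_iff.2 hF

theorem poisson_summation_gaussTerm : ∀ {n : ℕ} {M : Matrix (Fin n) (Fin n) ℝ} {t : ℂ},
    M.PosDef → 0 < t.re → ∀ b w : Fin n → ℂ, ∑' x, gaussTerm M t b w x =
      cexp (-(2 * π * Complex.I * (b ⬝ᵥ w))) *
        (1 / (M.det : ℂ) ^ (1 / 2 : ℂ) * (1 / t ^ (1 / 2 : ℂ)) ^ n) *
          ∑' y, gaussTerm M⁻¹ (1 / t) (-w) b y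
  | 0, M, t, _, _, b, w => by simp [gaussTerm]
  | n + 1, M, t, hM, ht, b, w => by
    have ha : 0 < M 0 0 := hM.diag_pos
    have hS := posDef_schur hM
    have hprimal := summable_vecCons (hasGaussianDecay_gaussTerm hM ht b w).summable
    have hdual :=
      summable_vecCons (hasGaussianDecay_gaussTerm hM.inv (one_div_re_pos ht) (-w) b).summable
    have hdet : (M.det : ℂ) ^ (1 / 2 : ℂ) =
        (M 0 0 : ℂ) ^ (1 / 2 : ℂ) * ((schur M).det : ℂ) ^ (1 / 2 : ℂ) := by
      rw [det_eq_mul_det_schur (isSymm_of_posDef hM) ha.ne', ofReal_mul,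
        mul_cpow_ofReal_nonneg ha.le hS.det_pos.le]
    rw [tsum_eq_tsum_vecCons, tsum_eq_tsum_vecCons (gaussTerm M⁻¹ _ _ _)]
    calc ∑' p : ℤ × (Fin n → ℤ), gaussTerm M t b w (vecCons p.1 p.2)
        = ∑' x : Fin n → ℤ, ∑' k : ℤ, gaussTerm M t b w (vecCons k x) := by
          rw [hprimal.tsum_prod]
          exact Summable.tsum_comm (f := fun x k => gaussTerm M t b w (vecCons k x))
            hprimal.prod_symm
      _ = 1 / (t * M 0 0) ^ (1 / 2 : ℂ) * ∑' k : ℤ, ∑' x : Fin n → ℤ, mixedTerm M t b w k x := by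
          simp only [tsum_gaussTerm_cons hM ht, tsum_mul_left]
          rw [Summable.tsum_comm (f := mixedTerm M t b w) (summable_mixedTerm hM ht b w)]
      _ = _ := by
          simp only [tsum_mixedTerm_eq hM b w (poisson_summation_gaussTerm hS ht), tsum_mul_left]
          rw [hdual.tsum_prod, mul_ofReal_cpow ht ha, hdet, pow_succ]
          ring

end PoissonSummation

section SphericalPoisson

variable {n : ℕ}

theorem hasSum_tsum_mul_exp {X : Type*} {c α : X → ℂ} {s : ℂ}
    (h : Summable fun x => ‖c x‖ * Real.exp (‖s‖ * ‖α x‖)) :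
    HasSum (fun ν : ℕ => s ^ ν * ∑' x, c x * α x ^ ν / ν.factorial)
      (∑' x, c x * cexp (s * α x)) := by
  have hnorm : ∀ x (ν : ℕ), ‖c x * ((s * α x) ^ ν / ν.factorial)‖ =
      ‖c x‖ * ((‖s‖ * ‖α x‖) ^ ν / ν.factorial) := fun x ν => by simp
  have hreal : ∀ x, HasSum (fun ν : ℕ => ‖c x‖ * ((‖s‖ * ‖α x‖) ^ ν / ν.factorial))
      (‖c x‖ * Real.exp (‖s‖ * ‖α x‖)) := fun x => by
    rw [Real.exp_eq_exp_ℝ]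
    exact (NormedSpace.expSeries_div_hasSum_exp (‖s‖ * ‖α x‖)).mul_left _
  have hcomplex : ∀ x, HasSum (fun ν : ℕ => c x * ((s * α x) ^ ν / ν.factorial))
      (c x * cexp (s * α x)) := fun x => by
    rw [Complex.exp_eq_exp_ℂ]
    exact (NormedSpace.expSeries_div_hasSum_exp (s * α x)).mul_left _
  have hsum : Summable fun p : X × ℕ => c p.1 * ((s * α p.1) ^ p.2 / p.2.factorial) := by
    refine Summable.of_norm ((summable_prod_of_nonneg fun p => norm_nonneg _).2 ⟨fun x => ?_, ?_⟩)
    · simpa only [hnorm] using (hreal x).summable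
    · simpa only [hnorm, (hreal _).tsum_eq] using h
  have htotal : ∑' p : X × ℕ, c p.1 * ((s * α p.1) ^ p.2 / p.2.factorial) =
      ∑' x, c x * cexp (s * α x) := by
    rw [hsum.tsum_prod]
    exact tsum_congr fun x => (hcomplex x).tsum_eq
  have hswap := (Equiv.prodComm ℕ X).hasSum_iff.2 (htotal ▸ hsum.hasSum)
  convert hswap.prod_fiberwise fun ν => (hswap.summable.prod_factor ν).hasSum using 2 with ν
  rw [← tsum_mul_left]
  refine tsum_congr fun x => ?_
  simp only [Function.comp_apply, Equiv.prodComm_apply, Prod.swap_prod_mk, mul_pow]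
  ring

theorem hasFPowerSeriesAt_of_hasSum {a : ℕ → ℂ} {G : ℂ → ℂ}
    (h : ∀ s, HasSum (fun ν : ℕ => s ^ ν * a ν) (G s)) :
    HasFPowerSeriesAt G (FormalMultilinearSeries.ofScalars ℂ a) 0 := by
  rw [hasFPowerSeriesAt_iff]
  refine Eventually.of_forall fun z => ?_
  simpa [FormalMultilinearSeries.coeff_ofScalars] using h z

theorem coeff_eq_of_hasSum {a b : ℕ → ℂ} {G : ℂ → ℂ}
    (ha : ∀ s, HasSum (fun ν : ℕ => s ^ ν * a ν) (G s))
    (hb : ∀ s, HasSum (fun ν : ℕ => s ^ ν * b ν) (G s)) : a = b := by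
  have h := (hasFPowerSeriesAt_of_hasSum ha).eq_formalMultilinearSeries
    (hasFPowerSeriesAt_of_hasSum hb)
  funext ν
  simpa [FormalMultilinearSeries.coeff_ofScalars] using
    congrArg (fun p => FormalMultilinearSeries.coeff p ν) h

theorem coeff_eq_of_gaussian_twist {a b : ℕ → ℂ} {G H : ℂ → ℂ} {κ : ℂ}
    (hG : ∀ s, HasSum (fun ν : ℕ => s ^ ν * a ν) (G s))
    (hH : ∀ s, HasSum (fun ν : ℕ => s ^ ν * b ν) (H s))
    (h : ∀ s, H s = cexp (κ * s ^ 2) * G s) {ν : ℕ} (hν : ν ≤ 1 ∨ κ = 0) : b ν = a ν := by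
  rcases hν with hν | rfl
  · interval_cases ν
    · have hG0 := (hG 0).unique (hasSum_single 0 fun k hk => by simp [hk])
      have hH0 := (hH 0).unique (hasSum_single 0 fun k hk => by simp [hk])
      simp_all
    · have hexp : HasDerivAt (fun s : ℂ => cexp (κ * s ^ 2)) 0 0 := by
        simpa using (((hasDerivAt_id (0 : ℂ)).pow 2).const_mul κ).cexp
      have hprod := hexp.mul (hasFPowerSeriesAt_of_hasSum hG).hasDerivAt
      have hderiv := (hasFPowerSeriesAt_of_hasSum hH).hasDerivAt
      rw [funext h] at hderiv
      simpa [FormalMultilinearSeries.ofScalars] using hderiv.unique hprod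
  · have hHG : H = G := funext fun s => by simp [h s]
    exact congrFun (coeff_eq_of_hasSum (hHG ▸ hH) hG) ν

theorem HasGaussianDecay.summable_mul_exp_norm {F : (Fin n → ℤ) → ℂ} (hF : HasGaussianDecay F)
    (s : ℂ) (l : Fin n → ℂ) (c : ℂ) :
    Summable fun x => ‖F x‖ * Real.exp (‖s‖ * ‖l ⬝ᵥ toComplex x + c‖) := by
  have hgrowth : HasExpGrowth fun x =>
      ((Real.exp (‖s‖ * ‖l ⬝ᵥ toComplex x + c‖) : ℝ) : ℂ) := by
    refine ⟨Real.exp (‖s‖ * ‖c‖), ‖s‖ * ∑ i, ‖l i‖, fun x => ?_⟩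
    rw [Complex.norm_real, Real.norm_of_nonneg (Real.exp_pos _).le, ← Real.exp_add,
      Real.exp_le_exp, mul_assoc, ← mul_add, add_comm ‖c‖]
    gcongr
    exact (norm_add_le _ _).trans (by gcongr; exact norm_dotProduct_toComplex_le l x)
  refine (hgrowth.mul_hasGaussianDecay hF).summable.norm.congr fun x => ?_
  rw [norm_mul, Complex.norm_real, Real.norm_of_nonneg (Real.exp_pos _).le, mul_comm]

theorem HasGaussianDecay.hasSum_tsum_mul_affine_pow {F : (Fin n → ℤ) → ℂ}
    (hF : HasGaussianDecay F) (l : Fin n → ℂ) (c s : ℂ) :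
    HasSum (fun ν : ℕ => s ^ ν * ∑' x, F x * (l ⬝ᵥ toComplex x + c) ^ ν / ν.factorial)
      (∑' x, F x * cexp (s * (l ⬝ᵥ toComplex x + c))) :=
  hasSum_tsum_mul_exp (hF.summable_mul_exp_norm s l c)

theorem tsum_mul_const_mul_pow_div {X : Type*} (F γ : X → ℂ) (k e : ℂ) (ν : ℕ) :
    ∑' x, F x * (k * γ x) ^ ν / e = k ^ ν / e * ∑' x, γ x ^ ν * F x := by
  rw [← tsum_mul_left]
  exact tsum_congr fun x => by rw [mul_pow]; ring

variable {M : Matrix (Fin n) (Fin n) ℝ} {t : ℂ}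

theorem gaussTerm_add_smul (hM : M.PosDef) (b l : Fin n → ℂ) (s : ℂ) (x : Fin n → ℤ) :
    gaussTerm M t (b + s • l) 0 x = cexp (-π * t * (l ⬝ᵥ M.map ofReal *ᵥ l) * s ^ 2) *
      (gaussTerm M t b 0 x *
        cexp (s * (-2 * π * t * (l ⬝ᵥ M.map ofReal *ᵥ (toComplex x + b))))) := by
  rw [gaussTerm, gaussTerm, ← Complex.exp_add, ← Complex.exp_add, ← add_assoc,
    form_add ((isSymm_of_posDef hM).map _) _ (s • l)]
  simp only [mulVec_smul, smul_dotProduct, dotProduct_smul, smul_eq_mul, zero_dotProduct]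
  ring_nf

theorem gaussTerm_zero_add_smul (b l : Fin n → ℂ) (s : ℂ) (y : Fin n → ℤ) :
    gaussTerm M t 0 (b + s • l) y =
      gaussTerm M t 0 b y * cexp (s * (2 * π * Complex.I * (l ⬝ᵥ toComplex y))) := by
  rw [gaussTerm, gaussTerm, ← Complex.exp_add]
  simp only [add_dotProduct, smul_dotProduct, smul_eq_mul]
  ring_nf

/- Translating `b` by `s • l` multiplies the two sides of Poisson summation by the exponential
generating functions of the powers of `l ⬝ᵥ M *ᵥ (x + b)` and of `l ⬝ᵥ y`, up to a Gaussian in `s`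
that is trivial to first order, and trivial if `l` is isotropic. -/
theorem tsum_linear_pow_mul_gaussTerm (hM : M.PosDef) (ht : 0 < t.re) (b : Fin n → ℂ)
    {l : Fin n → ℂ} {ν : ℕ} (hν : ν ≤ 1 ∨ l ⬝ᵥ M.map ofReal *ᵥ l = 0) :
    ∑' x, (l ⬝ᵥ M.map ofReal *ᵥ (toComplex x + b)) ^ ν * gaussTerm M t b 0 x =
      1 / (M.det : ℂ) ^ (1 / 2 : ℂ) * (1 / t ^ (1 / 2 : ℂ)) ^ n * (-Complex.I / t) ^ ν *
        ∑' y, (l ⬝ᵥ toComplex y) ^ ν * gaussTerm M⁻¹ (1 / t) 0 b y := by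
  set C := 1 / (M.det : ℂ) ^ (1 / 2 : ℂ) * (1 / t ^ (1 / 2 : ℂ)) ^ n
  set α : (Fin n → ℤ) → ℂ := fun x => -2 * π * t * (l ⬝ᵥ M.map ofReal *ᵥ (toComplex x + b)) with hα
  set β : (Fin n → ℤ) → ℂ := fun y => 2 * π * Complex.I * (l ⬝ᵥ toComplex y) with hβ
  have hα_affine : α = fun x => ((-2 * π * t) • (l ᵥ* M.map ofReal)) ⬝ᵥ toComplex x +
      -2 * π * t * ((l ᵥ* M.map ofReal) ⬝ᵥ b) := by
    simp only [hα, dotProduct_mulVec, dotProduct_add, smul_dotProduct, smul_eq_mul, mul_add]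
  have hβ_affine : β = fun y => ((2 * π * Complex.I) • l) ⬝ᵥ toComplex y + 0 := by
    simp only [hβ, smul_dotProduct, smul_eq_mul, add_zero]
  have hprimal (s : ℂ) : HasSum (fun ν : ℕ => s ^ ν * ∑' x, gaussTerm M t b 0 x * α x ^ ν /
      ν.factorial) (∑' x, gaussTerm M t b 0 x * cexp (s * α x)) := by
    rw [hα_affine]
    exact (hasGaussianDecay_gaussTerm hM ht b 0).hasSum_tsum_mul_affine_pow _ _ s
  have hdual (s : ℂ) : HasSum (fun ν : ℕ => s ^ ν * (C * ∑' y, gaussTerm M⁻¹ (1 / t) 0 b y *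
      β y ^ ν / ν.factorial)) (C * ∑' y, gaussTerm M⁻¹ (1 / t) 0 b y * cexp (s * β y)) := by
    rw [hβ_affine]
    simpa only [mul_left_comm C] using ((hasGaussianDecay_gaussTerm hM.inv (one_div_re_pos ht) 0
      b).hasSum_tsum_mul_affine_pow _ _ s).mul_left C
  have hcoeff := coeff_eq_of_gaussian_twist hprimal hdual
    (κ := -π * t * (l ⬝ᵥ M.map ofReal *ᵥ l)) (ν := ν) (fun s => ?_)
    (hν.imp_right fun h => by rw [h, mul_zero])
  · have ht0 : t ≠ 0 := fun h => by simp [h] at ht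
    have hk : 2 * (π : ℂ) * Complex.I = -2 * π * t * (-Complex.I / t) := by field_simp
    have hk0 : (-2 * π * t) ^ ν / (ν.factorial : ℂ) ≠ 0 :=
      div_ne_zero (pow_ne_zero _ (by simp [ht0, Real.pi_ne_zero])) (mod_cast ν.factorial_ne_zero)
    rw [hα, hβ, tsum_mul_const_mul_pow_div, tsum_mul_const_mul_pow_div, hk,
      mul_pow _ (-Complex.I / t)] at hcoeff
    exact mul_left_cancel₀ hk0 (hcoeff.symm.trans (by ring))
  · have h := poisson_summation_gaussTerm hM ht (b + s • l) 0
    simp only [gaussTerm_add_smul hM, neg_zero, gaussTerm_zero_add_smul, tsum_mul_left,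
      dotProduct_zero, mul_zero, Complex.exp_zero, one_mul] at h
    exact h.symm

end SphericalPoisson

section Forms

/-- The exponential `z ↦ exp (2πiz)`. -/
noncomputable def expTwoPi (z : ℂ) : ℂ := cexp (2 * π * Complex.I * z)

theorem expTwoPi_add (z w : ℂ) : expTwoPi (z + w) = expTwoPi z * expTwoPi w := by
  rw [expTwoPi, mul_add, Complex.exp_add, expTwoPi, expTwoPi]

theorem expTwoPi_intCast (k : ℤ) : expTwoPi k = 1 := by
  rw [expTwoPi, mul_comm, Complex.exp_int_mul_two_pi_mul_I]

theorem expTwoPi_intCast_div (k : ℤ) (d : ℕ) [NeZero d] :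
    expTwoPi (k / d) = ZMod.stdAddChar (k : ZMod d) := by
  rw [ZMod.stdAddChar_coe, expTwoPi, mul_div_assoc]

theorem norm_expTwoPi (z : ℂ) : ‖expTwoPi z‖ = Real.exp (-(2 * π * z.im)) := by
  rw [expTwoPi, Complex.norm_exp]
  simp [mul_re]

/-- A positive definite integral quadratic form `x ↦ ∑ i j, coeff i j * x i * x j`; the matrix of
coefficients need be neither symmetric nor triangular. -/
structure PosForm (n : ℕ) where
  coeff : Matrix (Fin n) (Fin n) ℤ
  posDef : ((coeff + coeffᵀ).map (Int.cast : ℤ → ℝ)).PosDef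

namespace PosForm

variable {n : ℕ} (Q : PosForm n)

/-- The Gram matrix `A` of the form, with `2 * Q x = ᵗx A x`. -/
def gram : Matrix (Fin n) (Fin n) ℤ := Q.coeff + Q.coeffᵀ

/-- The value of the form at a vector with entries in a commutative ring. -/
def eval {K : Type*} [CommRing K] (x : Fin n → K) : K := x ⬝ᵥ Q.coeff.map Int.cast *ᵥ x

theorem posDef_gram : (Q.gram.map (Int.cast : ℤ → ℝ)).PosDef := Q.posDef

theorem isSymm_gram : Q.gram.IsSymm := isSymm_add_transpose_self Q.coeff

section Eval

variable {K : Type*} [CommRing K]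

theorem eval_zero : Q.eval (0 : Fin n → K) = 0 := by simp [eval]

theorem eval_smul (c : K) (x : Fin n → K) : Q.eval (c • x) = c ^ 2 * Q.eval x := by
  simp only [eval, mulVec_smul, smul_dotProduct, dotProduct_smul, smul_eq_mul]
  ring

theorem eval_neg (x : Fin n → K) : Q.eval (-x) = Q.eval x := by
  simp [eval, mulVec_neg]

theorem dotProduct_gram_mulVec (x y : Fin n → K) : x ⬝ᵥ Q.gram.map Int.cast *ᵥ y =
    x ⬝ᵥ Q.coeff.map Int.cast *ᵥ y + y ⬝ᵥ Q.coeff.map Int.cast *ᵥ x := by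
  rw [gram, Matrix.map_add _ Int.cast_add, transpose_map, add_mulVec, dotProduct_add,
    mulVec_transpose, dotProduct_comm x (y ᵥ* _), ← dotProduct_mulVec]

theorem eval_add (x y : Fin n → K) :
    Q.eval (x + y) = Q.eval x + x ⬝ᵥ Q.gram.map Int.cast *ᵥ y + Q.eval y := by
  rw [dotProduct_gram_mulVec]
  simp only [eval, mulVec_add, dotProduct_add, add_dotProduct]
  ring

theorem two_mul_eval (x : Fin n → K) : 2 * Q.eval x = x ⬝ᵥ Q.gram.map Int.cast *ᵥ x := by
  rw [dotProduct_gram_mulVec, eval, two_mul]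

theorem cast_eval (x : Fin n → ℤ) : ((Q.eval x : ℤ) : K) = Q.eval fun i => (x i : K) := by
  simp [eval, dotProduct, mulVec]

end Eval

theorem eval_toReal (x : Fin n → ℤ) : Q.eval (toReal x) = Q.eval x := (Q.cast_eval x).symm

theorem eval_toComplex (x : Fin n → ℤ) : Q.eval (toComplex x) = Q.eval x := (Q.cast_eval x).symm

theorem eval_pos {x : Fin n → ℤ} (hx : x ≠ 0) : 0 < Q.eval x := by
  have hx' : toReal x ≠ 0 := fun h => hx <| by
    ext i; simpa [toReal] using congrFun h i
  have h := Q.posDef_gram.dotProduct_mulVec_pos hx'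
  rw [star_trivial, ← two_mul_eval, eval_toReal] at h
  exact_mod_cast pos_of_mul_pos_right h zero_le_two

theorem eval_nonneg (x : Fin n → ℤ) : 0 ≤ Q.eval x := by
  rcases eq_or_ne x 0 with rfl | hx
  · exact Q.eval_zero.ge
  · exact (Q.eval_pos hx).le

end PosForm

end Forms

section WeightedTheta

namespace PosForm

variable {n : ℕ} (Q : PosForm n) {p : (Fin n → ℤ) → ℂ} {z : ℂ}

/-- The theta series of the form `Q` with weight `p`; congruence conditions and spherical functions
are both encoded in the weight. -/
noncomputable def theta (p : (Fin n → ℤ) → ℂ) (z : ℂ) : ℂ := ∑' x, p x * expTwoPi (Q.eval x * z)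

theorem map_ofReal_gram :
    (Q.gram.map (Int.cast : ℤ → ℝ)).map ofReal = Q.gram.map (Int.cast : ℤ → ℂ) := by
  ext; simp

theorem gaussTerm_gram (b w : Fin n → ℂ) (x : Fin n → ℤ) :
    gaussTerm (Q.gram.map (Int.cast : ℤ → ℝ)) (-Complex.I * z) b w x =
      expTwoPi (Q.eval (toComplex x + b) * z + w ⬝ᵥ toComplex x) := by
  rw [gaussTerm, expTwoPi, map_ofReal_gram, ← two_mul_eval]
  ring_nf

theorem hasGaussianDecay_expTwoPi_eval (hz : 0 < z.im) :
    HasGaussianDecay fun x : Fin n → ℤ => expTwoPi (Q.eval x * z) := by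
  convert hasGaussianDecay_gaussTerm Q.posDef_gram (t := -Complex.I * z) (by simpa using hz) 0 0
    using 2 with x
  rw [gaussTerm_gram, add_zero, zero_dotProduct, add_zero, eval_toComplex]

theorem summable_theta (hp : HasExpGrowth p) (hz : 0 < z.im) :
    Summable fun x => p x * expTwoPi (Q.eval x * z) :=
  (hp.mul_hasGaussianDecay (Q.hasGaussianDecay_expTwoPi_eval hz)).summable

theorem norm_expTwoPi_eval (x : Fin n → ℤ) (z : ℂ) :
    ‖expTwoPi (Q.eval x * z)‖ = Real.exp (-(2 * π * (Q.eval x * z.im))) := by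
  rw [norm_expTwoPi, ← ofReal_intCast, im_ofReal_mul]

theorem norm_theta_term_le {y : ℝ} (hz : y ≤ z.im) (x : Fin n → ℤ) :
    ‖p x * expTwoPi (Q.eval x * z)‖ ≤ ‖p x * expTwoPi (Q.eval x * (y * Complex.I))‖ := by
  have hQ : (0 : ℝ) ≤ Q.eval x := by exact_mod_cast Q.eval_nonneg x
  rw [norm_mul, norm_mul, norm_expTwoPi_eval, norm_expTwoPi_eval, im_ofReal_mul, Complex.I_im,
    mul_one]
  gcongr

theorem differentiableOn_theta (hp : HasExpGrowth p) :
    DifferentiableOn ℂ (Q.theta p) {z | 0 < z.im} := by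
  intro z hz
  have hopen : IsOpen {w : ℂ | z.im / 2 < w.im} := isOpen_lt continuous_const continuous_im
  have hdiff : DifferentiableOn ℂ (Q.theta p) {w | z.im / 2 < w.im} :=
    differentiableOn_tsum_of_summable_norm
      (Q.summable_theta (z := (z.im / 2 : ℝ) * Complex.I) hp (by simpa using hz)).norm
      (fun x => by unfold expTwoPi; fun_prop) hopen fun x w hw => Q.norm_theta_term_le hw.le x
  exact (hdiff.differentiableAt
    (hopen.mem_nhds (half_lt_self (a := z.im) hz))).differentiableWithinAt

theorem tendsto_theta (hp : HasExpGrowth p) :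
    Tendsto (Q.theta p) (comap Complex.im atTop) (nhds (p 0)) := by
  rw [← tsum_ite_eq (0 : Fin n → ℤ) p]
  refine tendsto_tsum_of_dominated_convergence
    (Q.summable_theta (z := (1 : ℝ) * Complex.I) hp (by simp)).norm (fun x => ?_) ?_
  · rcases eq_or_ne x 0 with rfl | hx
    · simpa [eval_zero, expTwoPi] using tendsto_const_nhds
    · rw [if_neg hx, tendsto_zero_iff_norm_tendsto_zero, ← mul_zero ‖p x‖]
      simp only [norm_mul, norm_expTwoPi_eval]
      have hQ : (0 : ℝ) < Q.eval x := by exact_mod_cast Q.eval_pos hx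
      refine (Real.tendsto_exp_neg_atTop_nhds_zero.comp ?_).const_mul _
      exact (tendsto_comap.const_mul_atTop hQ).const_mul_atTop Real.two_pi_pos
  · filter_upwards [tendsto_comap.eventually_ge_atTop (1 : ℝ)] with z hz
    exact Q.norm_theta_term_le hz

theorem theta_const_mul (c : ℂ) (p : (Fin n → ℤ) → ℂ) (z : ℂ) :
    Q.theta (fun x => c * p x) z = c * Q.theta p z := by
  simp only [theta, mul_assoc, tsum_mul_left]

theorem theta_sum {ι : Type*} (s : Finset ι) {p : ι → (Fin n → ℤ) → ℂ}
    (hp : ∀ i, HasExpGrowth (p i)) (hz : 0 < z.im) :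
    Q.theta (fun x => ∑ i ∈ s, p i x) z = ∑ i ∈ s, Q.theta (p i) z := by
  simp only [theta, Finset.sum_mul]
  exact Summable.tsum_finsetSum fun i _ => Q.summable_theta (hp i) hz

theorem theta_add (p : (Fin n → ℤ) → ℂ) (r z : ℂ) :
    Q.theta p (r + z) = Q.theta (fun x => expTwoPi (Q.eval x * r) * p x) z := by
  refine tsum_congr fun x => ?_
  rw [mul_add, expTwoPi_add]
  ring

theorem theta_intCast_add (p : (Fin n → ℤ) → ℂ) (b : ℤ) (z : ℂ) :
    Q.theta p (b + z) = Q.theta p z := by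
  simp only [theta_add, ← Int.cast_mul, expTwoPi_intCast, one_mul]

theorem theta_comp_neg (p : (Fin n → ℤ) → ℂ) (z : ℂ) :
    Q.theta (fun x => p (-x)) z = Q.theta p z := by
  rw [theta, theta, ← (Equiv.neg (Fin n → ℤ)).tsum_eq]
  simp only [Equiv.neg_apply, neg_neg, eval_neg]

end PosForm

end WeightedTheta

section Cosets

variable {n : ℕ}

/-- The coset `u + m ℤⁿ`. -/
def coset (u : Fin n → ℤ) (m : ℕ) : Set (Fin n → ℤ) := {x | ∀ i, (m : ℤ) ∣ x i - u i}

/-- The reduction modulo `d` of an integral vector. -/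
def toZMod (d : ℕ) (x : Fin n → ℤ) : Fin n → ZMod d := fun i => x i

/-- The representative with entries in `[0, d)` of a vector modulo `d`. -/
def zmodRep {d : ℕ} (s : Fin n → ZMod d) : Fin n → ℤ := fun i => (s i).val

theorem toZMod_zmodRep {d : ℕ} [NeZero d] (s : Fin n → ZMod d) : toZMod d (zmodRep s) = s := by
  ext i; simp [toZMod, zmodRep]

theorem toZMod_add (d : ℕ) (x y : Fin n → ℤ) : toZMod d (x + y) = toZMod d x + toZMod d y := by
  ext i; simp [toZMod]

theorem toZMod_smul (d : ℕ) (c : ℤ) (x : Fin n → ℤ) :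
    toZMod d (c • x) = (c : ZMod d) • toZMod d x := by
  ext i; simp [toZMod]

theorem mem_coset_iff {u x : Fin n → ℤ} {m : ℕ} :
    x ∈ coset u m ↔ ∃ k : Fin n → ℤ, u + (m : ℤ) • k = x := by
  simp only [coset, Set.mem_ofPred_eq, dvd_def, Classical.skolem, funext_iff, Pi.add_apply,
    Pi.smul_apply, smul_eq_mul]
  exact exists_congr fun k => forall_congr' fun i => by rw [sub_eq_iff_eq_add', eq_comm]

theorem coset_congr {u v : Fin n → ℤ} {m : ℕ} (h : v ∈ coset u m) : coset v m = coset u m := by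
  ext x
  exact forall_congr' fun i => by rw [← dvd_add_left (h i), sub_add_sub_cancel]

theorem neg_mem_coset {u x : Fin n → ℤ} {m : ℕ} : -x ∈ coset u m ↔ x ∈ coset (-u) m := by
  refine forall_congr' fun i => ?_
  rw [← dvd_neg, Pi.neg_apply, Pi.neg_apply]
  ring_nf

theorem add_smul_mem_coset_zmodRep {m d : ℕ} [NeZero d] (hm : m ≠ 0) (u k : Fin n → ℤ)
    (s : Fin n → ZMod d) :
    u + (m : ℤ) • k ∈ coset (u + (m : ℤ) • zmodRep s) (m * d) ↔ toZMod d k = s := by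
  have hm' : (m : ℤ) ≠ 0 := by exact_mod_cast hm
  rw [funext_iff]
  refine forall_congr' fun i => ?_
  simp only [Pi.add_apply, Pi.smul_apply, smul_eq_mul, add_sub_add_left_eq_sub, ← mul_sub,
    Nat.cast_mul, mul_dvd_mul_iff_left hm']
  rw [← ZMod.intCast_eq_intCast_iff_dvd_sub, eq_comm]
  simp [toZMod, zmodRep]

theorem tsum_indicator_coset {m : ℕ} (hm : m ≠ 0) (u : Fin n → ℤ) (F : (Fin n → ℤ) → ℂ) :
    ∑' x, (coset u m).indicator F x = ∑' k : Fin n → ℤ, F (u + (m : ℤ) • k) := by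
  have hm' : (m : ℤ) ≠ 0 := by exact_mod_cast hm
  have hinj : Function.Injective fun k : Fin n → ℤ => u + (m : ℤ) • k :=
    (add_right_injective u).comp (smul_right_injective _ hm')
  rw [← hinj.tsum_eq fun x hx => ?_]
  · exact tsum_congr fun k => Set.indicator_of_mem (mem_coset_iff.2 ⟨k, rfl⟩) F
  · exact mem_coset_iff.1 (Set.mem_of_indicator_ne_zero hx)

theorem HasExpGrowth.indicator {p : (Fin n → ℤ) → ℂ} (hp : HasExpGrowth p)
    (s : Set (Fin n → ℤ)) : HasExpGrowth (s.indicator p) := by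
  obtain ⟨c, K, hp⟩ := hp
  exact ⟨c, K, fun x => (norm_indicator_le_norm_self p x).trans (hp x)⟩

end Cosets

section PoissonDual

theorem neg_one_div_im_pos {w : ℂ} (hw : 0 < w.im) : 0 < (-1 / w).im := by
  rw [neg_div, neg_im, one_div, inv_im, neg_div, neg_neg]
  exact div_pos hw (normSq_pos.2 fun h => by simp [h] at hw)

theorem one_div_cpow_half_pow {n : ℕ} (hn : Even n) (t : ℂ) :
    (1 / t ^ (1 / 2 : ℂ)) ^ n = (1 / t) ^ (n / 2) := by
  obtain ⟨k, rfl⟩ := hn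
  rw [← two_mul, Nat.mul_div_cancel_left _ two_pos, pow_mul, div_pow, one_pow, one_div (2 : ℂ),
    show (t ^ (2 : ℂ)⁻¹) ^ 2 = t by simp]

variable {n : ℕ}

theorem toComplex_add_smul {M : ℕ} (hM : M ≠ 0) (v k : Fin n → ℤ) :
    toComplex (v + (M : ℤ) • k) = (M : ℂ) • (toComplex k + (M : ℂ)⁻¹ • toComplex v) := by
  have hM' : (M : ℂ) ≠ 0 := by exact_mod_cast hM
  ext i
  simp [toComplex, mul_add, hM', add_comm]

theorem toComplex_dotProduct (x y : Fin n → ℤ) :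
    toComplex x ⬝ᵥ toComplex y = (x ⬝ᵥ y : ℤ) := by
  simp [toComplex, dotProduct]

theorem gaussTerm_smul (r : ℝ) (M : Matrix (Fin n) (Fin n) ℝ) (t : ℂ) (b w : Fin n → ℂ)
    (x : Fin n → ℤ) : gaussTerm (r • M) t b w x = gaussTerm M (r * t) b w x := by
  have hmap : (r • M).map ofReal = (r : ℂ) • M.map ofReal := by ext; simp
  rw [gaussTerm, gaussTerm, hmap, smul_mulVec, dotProduct_smul, smul_eq_mul]
  ring_nf

theorem map_intCast_mul_eq_smul_one {K : Type*} [CommRing K] {A B : Matrix (Fin n) (Fin n) ℤ}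
    {N : ℕ} (h : A * B = (N : ℤ) • 1) :
    A.map (Int.cast : ℤ → K) * B.map Int.cast = (N : K) • 1 := by
  have h := congrArg (Int.castRingHom K).mapMatrix h
  rwa [map_mul, map_zsmul, map_one, natCast_zsmul, ← Nat.cast_smul_eq_nsmul K] at h

theorem inv_map_intCast_eq_smul {K : Type*} [Field K] [CharZero K]
    {A B : Matrix (Fin n) (Fin n) ℤ} {N : ℕ} (hN : N ≠ 0) (h : A * B = (N : ℤ) • 1) :
    (A.map (Int.cast : ℤ → K))⁻¹ = (N : K)⁻¹ • B.map Int.cast := by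
  refine inv_eq_right_inv ?_
  rw [mul_smul_comm, map_intCast_mul_eq_smul_one h, smul_smul,
    inv_mul_cancel₀ (Nat.cast_ne_zero.2 hN), one_smul]

namespace PosForm

/-- `R` is the form with Gram matrix `N A⁻¹`, where `A` is the Gram matrix of `Q`. -/
structure IsDual (Q R : PosForm n) (N : ℕ) : Prop where
  pos : 0 < N
  mul_gram : Q.gram * R.gram = (N : ℤ) • 1

/-- `p'` is the weight dual to the weight `p` of degree `ν` under Poisson summation over the cosets
of the multiples of `ℤⁿ`. -/
structure IsPoissonDual (Q R : PosForm n) (N ν : ℕ) (p p' : (Fin n → ℤ) → ℂ) : Prop where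
  hasExpGrowth : HasExpGrowth p
  hasExpGrowth_dual : HasExpGrowth p'
  theta_coset : ∀ (v : Fin n → ℤ) {M : ℕ} {w : ℂ}, M ≠ 0 → 0 < w.im →
    Q.theta ((coset v M).indicator p) (-1 / w) =
      (w / (Complex.I * M ^ 2)) ^ (n / 2) * (-w / M) ^ ν *
        R.theta (fun y => expTwoPi ((v ⬝ᵥ y : ℤ) / M) * p' y) (w / (N * M ^ 2))

variable {Q R : PosForm n} {N : ℕ}

theorem IsDual.ne_zero (h : Q.IsDual R N) : (N : ℂ) ≠ 0 := by exact_mod_cast h.pos.ne'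

theorem IsDual.mul_map_gram {K : Type*} [CommRing K] (h : Q.IsDual R N) :
    Q.gram.map (Int.cast : ℤ → K) * R.gram.map Int.cast = (N : K) • 1 :=
  map_intCast_mul_eq_smul_one h.mul_gram

theorem IsDual.inv_gram (h : Q.IsDual R N) : (Q.gram.map (Int.cast : ℤ → ℝ))⁻¹ =
    (N : ℝ)⁻¹ • R.gram.map (Int.cast : ℤ → ℝ) :=
  inv_map_intCast_eq_smul h.pos.ne' h.mul_gram

theorem theta_indicator_coset {m : ℕ} (hm : m ≠ 0) (u : Fin n → ℤ) (p : (Fin n → ℤ) → ℂ) (z : ℂ) :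
    Q.theta ((coset u m).indicator p) z = ∑' k : Fin n → ℤ,
      p (u + (m : ℤ) • k) * expTwoPi (Q.eval (u + (m : ℤ) • k) * z) := by
  rw [← tsum_indicator_coset hm u fun x => p x * expTwoPi (Q.eval x * z)]
  exact tsum_congr fun x => (Set.indicator_mul_left _ p fun x => expTwoPi (Q.eval x * z)).symm

theorem linear_pow_mul_expTwoPi_add_smul {M : ℕ} (hM : M ≠ 0) (l : Fin n → ℂ) (ν : ℕ) (z : ℂ)
    (v k : Fin n → ℤ) :
    (l ⬝ᵥ Q.gram.map Int.cast *ᵥ toComplex (v + (M : ℤ) • k)) ^ ν *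
        expTwoPi (Q.eval (v + (M : ℤ) • k) * z) =
      M ^ ν * ((l ⬝ᵥ (Q.gram.map (Int.cast : ℤ → ℝ)).map ofReal *ᵥ
          (toComplex k + (M : ℂ)⁻¹ • toComplex v)) ^ ν *
        gaussTerm (Q.gram.map Int.cast) (-Complex.I * (M ^ 2 * z))
          ((M : ℂ)⁻¹ • toComplex v) 0 k) := by
  rw [gaussTerm_gram, map_ofReal_gram, ← eval_toComplex, toComplex_add_smul hM, eval_smul,
    mulVec_smul, dotProduct_smul, smul_eq_mul, zero_dotProduct, add_zero, mul_pow]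
  ring_nf

theorem isPoissonDual_linear_pow (hn : Even n) (h : Q.IsDual R N) {l : Fin n → ℂ} {ν : ℕ}
    (hl : ν ≤ 1 ∨ l ⬝ᵥ Q.gram.map Int.cast *ᵥ l = 0) :
    Q.IsPoissonDual R N ν (fun x => (l ⬝ᵥ Q.gram.map Int.cast *ᵥ toComplex x) ^ ν)
      fun y => 1 / ((Q.gram.map (Int.cast : ℤ → ℝ)).det : ℂ) ^ (1 / 2 : ℂ) *
        (l ⬝ᵥ toComplex y) ^ ν where
  hasExpGrowth := by
    simpa only [dotProduct_mulVec, add_zero] using hasExpGrowth_linear_pow (l ᵥ* _) 0 ν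
  hasExpGrowth_dual := by
    simpa only [add_zero] using (hasExpGrowth_linear_pow l 0 ν).const_mul _
  theta_coset v M w hM hw := by
    have hM' : (M : ℂ) ≠ 0 := by exact_mod_cast hM
    have hw' : w ≠ 0 := fun h => by simp [h] at hw
    set t := -Complex.I * (M ^ 2 * (-1 / w)) with ht
    have htre : 0 < t.re := by
      have := neg_one_div_im_pos hw
      rw [ht, ← ofReal_natCast, ← ofReal_pow, neg_mul, neg_re, I_mul_re, im_ofReal_mul, neg_neg]
      positivity
    have htinv : 1 / t = w / (Complex.I * M ^ 2) := by rw [ht]; field_simp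
    have hdual : ((N : ℝ)⁻¹ : ℝ) * (w / (Complex.I * M ^ 2)) = -Complex.I * (w / (N * M ^ 2)) := by
      have hN := h.ne_zero
      push_cast
      field_simp
      linear_combination Complex.I_sq
    have hpow : (M : ℂ) ^ ν * (-Complex.I / t) ^ ν = (-w / M) ^ ν := by
      rw [← mul_pow, ht]
      field_simp
    rw [theta_indicator_coset hM]
    simp only [linear_pow_mul_expTwoPi_add_smul hM, tsum_mul_left, ← ht]
    rw [tsum_linear_pow_mul_gaussTerm Q.posDef_gram htre _ (by rwa [map_ofReal_gram]),
      one_div_cpow_half_pow hn, htinv, h.inv_gram, ← hpow]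
    simp only [gaussTerm_smul, hdual, gaussTerm_gram, theta, ← tsum_mul_left]
    refine tsum_congr fun y => ?_
    rw [add_zero, eval_toComplex, expTwoPi_add, smul_dotProduct, smul_eq_mul, inv_mul_eq_div,
      toComplex_dotProduct]
    ring

end PosForm

end PoissonDual

section SphericalDual

variable {n : ℕ}

theorem sphericalLin_eq_dotProduct (A : Matrix (Fin n) (Fin n) ℤ) (l : Fin n → ℂ) (x : Fin n → ℤ) :
    sphericalLin A l x = l ⬝ᵥ A.map Int.cast *ᵥ toComplex x := by
  simp only [sphericalLin, dotProduct, mulVec, Finset.mul_sum, toComplex, map_apply, mul_assoc]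

theorem IsSpherical.exists_sum {A : Matrix (Fin n) (Fin n) ℤ} {ν : ℕ} {P : (Fin n → ℤ) → ℂ}
    (hP : IsSpherical A ν P) : ∃ (k : ℕ) (c : Fin k → ℂ) (l : Fin k → Fin n → ℂ),
      (∀ t, ν ≤ 1 ∨ l t ⬝ᵥ A.map Int.cast *ᵥ l t = 0) ∧
      P = fun x => ∑ t, c t * (l t ⬝ᵥ A.map Int.cast *ᵥ toComplex x) ^ ν := by
  simp only [← sphericalLin_eq_dotProduct]
  rcases hP with ⟨rfl, c, rfl⟩ | ⟨rfl, l, rfl⟩ | ⟨-, k, c, l, hl, rfl⟩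
  · exact ⟨1, fun _ => c, 0, fun _ => .inl zero_le_one, by simp⟩
  · exact ⟨1, 1, fun _ => l, fun _ => .inl le_rfl, by simp⟩
  · refine ⟨k, c, l, fun t => .inr ?_, rfl⟩
    simpa only [dotProduct, mulVec, Finset.mul_sum, map_apply, mul_assoc] using hl t

theorem toComplex_zero : toComplex (0 : Fin n → ℤ) = 0 := by ext; simp [toComplex]

theorem IsSpherical.map_zero {A : Matrix (Fin n) (Fin n) ℤ} {ν : ℕ} {P : (Fin n → ℤ) → ℂ}
    (hP : IsSpherical A ν P) (hν : ν ≠ 0) : P 0 = 0 := by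
  obtain ⟨k, c, l, -, rfl⟩ := hP.exists_sum
  simp [toComplex_zero, hν]

theorem IsSpherical.map_neg {A : Matrix (Fin n) (Fin n) ℤ} {ν : ℕ} {P : (Fin n → ℤ) → ℂ}
    (hP : IsSpherical A ν P) (x : Fin n → ℤ) : P (-x) = (-1) ^ ν * P x := by
  obtain ⟨k, c, l, -, rfl⟩ := hP.exists_sum
  have hneg : toComplex (-x) = -toComplex x := by ext; simp [toComplex]
  simp only [hneg, mulVec_neg, dotProduct_neg, Finset.mul_sum, mul_left_comm _ (c _), ← mul_pow,
    neg_one_mul]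

theorem norm_expTwoPi_intCast_div (k : ℤ) (d : ℕ) : ‖expTwoPi (k / d)‖ = 1 := by
  rw [norm_expTwoPi]
  simp [div_natCast_im]

theorem HasExpGrowth.expTwoPi_mul {p : (Fin n → ℤ) → ℂ} (hp : HasExpGrowth p) (v : Fin n → ℤ)
    (M : ℕ) : HasExpGrowth fun y => expTwoPi ((v ⬝ᵥ y : ℤ) / M) * p y :=
  (HasExpGrowth.of_norm_le fun _ => (norm_expTwoPi_intCast_div _ M).le).mul hp

namespace PosForm

variable {Q R : PosForm n} {N ν : ℕ}

theorem IsDual.div_im_pos (h : Q.IsDual R N) {M : ℕ} (hM : M ≠ 0) {w : ℂ} (hw : 0 < w.im) :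
    0 < (w / (N * M ^ 2)).im := by
  have hN := h.pos
  rw [show (N * M ^ 2 : ℂ) = ((N * M ^ 2 : ℕ) : ℂ) by push_cast; rfl, div_natCast_im]
  positivity

theorem IsPoissonDual.sum_const_mul {ι : Type*} [Fintype ι] {p p' : ι → (Fin n → ℤ) → ℂ}
    (hR : Q.IsDual R N) (h : ∀ t, Q.IsPoissonDual R N ν (p t) (p' t)) (c : ι → ℂ) :
    Q.IsPoissonDual R N ν (fun x => ∑ t, c t * p t x) fun y => ∑ t, c t * p' t y where
  hasExpGrowth := .sum _ fun t => (h t).hasExpGrowth.const_mul (c t)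
  hasExpGrowth_dual := .sum _ fun t => (h t).hasExpGrowth_dual.const_mul (c t)
  theta_coset v M w hM hw := by
    have hind : (coset v M).indicator (fun x => ∑ t, c t * p t x) =
        fun x => ∑ t, c t * (coset v M).indicator (p t) x := by
      ext x
      by_cases hx : x ∈ coset v M <;> simp [hx]
    simp only [hind, Finset.mul_sum, mul_left_comm _ (c _)]
    rw [theta_sum _ _ (fun t => ((h t).hasExpGrowth.indicator _).const_mul (c t))
        (neg_one_div_im_pos hw),
      theta_sum _ _ (fun t => ((h t).hasExpGrowth_dual.expTwoPi_mul v M).const_mul (c t))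
        (hR.div_im_pos hM hw), Finset.mul_sum]
    refine Finset.sum_congr rfl fun t _ => ?_
    rw [theta_const_mul, theta_const_mul, (h t).theta_coset v hM hw, mul_left_comm]

theorem _root_.IsSpherical.exists_isPoissonDual {P : (Fin n → ℤ) → ℂ} (hn : Even n)
    (hR : Q.IsDual R N) (hP : IsSpherical Q.gram ν P) :
    ∃ P', Q.IsPoissonDual R N ν P P' ∧ (ν ≠ 0 → P' 0 = 0) := by
  obtain ⟨k, c, l, hl, rfl⟩ := hP.exists_sum
  refine ⟨_, .sum_const_mul hR (fun t => isPoissonDual_linear_pow hn hR (hl t)) c, fun hν => ?_⟩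
  simp [toComplex_zero, hν]

end PosForm

end SphericalDual

section Twist

variable {n : ℕ}

theorem intCast_dotProduct (d : ℕ) (x y : Fin n → ℤ) :
    ((x ⬝ᵥ y : ℤ) : ZMod d) = toZMod d x ⬝ᵥ toZMod d y := by
  simp [toZMod, dotProduct]

namespace PosForm

/-- The factor by which the dual weight is multiplied when the theta series of the coset `u + m ℤⁿ`
is expanded at the cusp `b / d`. -/
noncomputable def dualPhase (Q : PosForm n) (u : Fin n → ℤ) (m : ℕ) (b : ℤ) (d : ℕ) [NeZero d]
    (y : Fin n → ℤ) : ℂ :=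
  expTwoPi ((u ⬝ᵥ y : ℤ) / (m * d : ℕ)) * ∑ s : Fin n → ZMod d,
    ZMod.stdAddChar ((b : ZMod d) * Q.eval (toZMod d u + (m : ZMod d) • s) + s ⬝ᵥ toZMod d y)

variable {Q R : PosForm n} {N ν m : ℕ} {p p' : (Fin n → ℤ) → ℂ}

theorem intCast_eval (Q : PosForm n) (d : ℕ) (x : Fin n → ℤ) :
    ((Q.eval x : ℤ) : ZMod d) = Q.eval (toZMod d x) := Q.cast_eval x

theorem expTwoPi_eval_mul_indicator_coset (Q : PosForm n) (hm : m ≠ 0) (u : Fin n → ℤ) (b : ℤ)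
    (d : ℕ) [NeZero d] (p : (Fin n → ℤ) → ℂ) (x : Fin n → ℤ) :
    expTwoPi (Q.eval x * (b / d)) * (coset u m).indicator p x =
      ∑ s : Fin n → ZMod d,
        ZMod.stdAddChar ((b : ZMod d) * Q.eval (toZMod d u + (m : ZMod d) • s)) *
          (coset (u + (m : ℤ) • zmodRep s) (m * d)).indicator p x := by
  classical
  by_cases hx : x ∈ coset u m
  · obtain ⟨k, rfl⟩ := mem_coset_iff.1 hx
    simp only [Set.indicator_apply, hx, add_smul_mem_coset_zmodRep hm, mul_ite, mul_zero, if_true,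
      Finset.sum_ite_eq, Finset.mem_univ]
    rw [mul_div_left_comm, ← mul_div_assoc, ← Int.cast_mul, expTwoPi_intCast_div, Int.cast_mul,
      intCast_eval, toZMod_add, toZMod_smul, Int.cast_natCast]
  · rw [Set.indicator_of_notMem hx, mul_zero, Finset.sum_eq_zero fun s _ => ?_]
    rw [Set.indicator_of_notMem (fun h => hx fun i => ?_), mul_zero]
    have hdvd : (m : ℤ) ∣ x i - (u + (m : ℤ) • zmodRep s) i :=
      (Int.natCast_dvd_natCast.2 (dvd_mul_right m d)).trans (h i)
    rwa [Pi.add_apply, Pi.smul_apply, smul_eq_mul, ← sub_sub,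
      dvd_sub_left (dvd_mul_right _ _)] at hdvd

theorem expTwoPi_dotProduct_add_smul (hm : m ≠ 0) (u y : Fin n → ℤ) {d : ℕ} [NeZero d]
    (s : Fin n → ZMod d) :
    expTwoPi (((u + (m : ℤ) • zmodRep s) ⬝ᵥ y : ℤ) / (m * d : ℕ)) =
      expTwoPi ((u ⬝ᵥ y : ℤ) / (m * d : ℕ)) * ZMod.stdAddChar (s ⬝ᵥ toZMod d y) := by
  have hm' : (m : ℂ) ≠ 0 := by exact_mod_cast hm
  rw [add_dotProduct, smul_dotProduct, Int.cast_add, add_div, expTwoPi_add, smul_eq_mul,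
    Int.cast_mul, Int.cast_natCast, Nat.cast_mul, mul_div_mul_left _ _ hm', expTwoPi_intCast_div,
    intCast_dotProduct, toZMod_zmodRep]

theorem _root_.HasExpGrowth.dualPhase_mul (hp : HasExpGrowth p) (Q : PosForm n) (u : Fin n → ℤ)
    (m : ℕ) (b : ℤ) (d : ℕ) [NeZero d] : HasExpGrowth fun y => Q.dualPhase u m b d y * p y := by
  refine (HasExpGrowth.of_norm_le (c := Fintype.card (Fin n → ZMod d)) fun y => ?_).mul hp
  rw [dualPhase, norm_mul, norm_expTwoPi_intCast_div, one_mul]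
  exact (norm_sum_le _ _).trans_eq (by simp)

theorem IsPoissonDual.theta_twist (hR : Q.IsDual R N) (h : Q.IsPoissonDual R N ν p p') (hm : m ≠ 0)
    (u : Fin n → ℤ) (b : ℤ) (d : ℕ) [NeZero d] {w : ℂ} (hw : 0 < w.im) :
    Q.theta ((coset u m).indicator p) (b / d + -1 / w) =
      (w / (Complex.I * (m * d : ℕ) ^ 2)) ^ (n / 2) * (-w / (m * d : ℕ)) ^ ν *
        R.theta (fun y => Q.dualPhase u m b d y * p' y) (w / (N * (m * d : ℕ) ^ 2)) := by
  have hmd : m * d ≠ 0 := mul_ne_zero hm (NeZero.ne d)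
  have hphase (y : Fin n → ℤ) : Q.dualPhase u m b d y * p' y = ∑ s : Fin n → ZMod d,
      ZMod.stdAddChar ((b : ZMod d) * Q.eval (toZMod d u + (m : ZMod d) • s)) *
        (expTwoPi (((u + (m : ℤ) • zmodRep s) ⬝ᵥ y : ℤ) / (m * d : ℕ)) * p' y) := by
    simp only [dualPhase, expTwoPi_dotProduct_add_smul hm, Finset.mul_sum, Finset.sum_mul,
      AddChar.map_add_eq_mul]
    exact Finset.sum_congr rfl fun s _ => by ring
  simp only [theta_add, expTwoPi_eval_mul_indicator_coset Q hm, hphase]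
  rw [theta_sum _ _ (fun s => (h.hasExpGrowth.indicator _).const_mul _) (neg_one_div_im_pos hw),
    theta_sum _ _ (fun s => (h.hasExpGrowth_dual.expTwoPi_mul _ _).const_mul _)
      (hR.div_im_pos hmd hw), Finset.mul_sum]
  refine Finset.sum_congr rfl fun s _ => ?_
  rw [theta_const_mul, theta_const_mul, h.theta_coset _ hmd hw, mul_left_comm]

end PosForm

end Twist

section Moebius

variable {n : ℕ}

theorem div_eq_div_add_neg_one_div {a b c d τ : ℂ} (hdet : a * d - b * c = 1) (hc : c ≠ 0)
    (hj : c * τ + d ≠ 0) : (a * τ + b) / (c * τ + d) = a / c + -1 / (c * (c * τ + d)) := by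
  rw [div_add_div _ _ hc (mul_ne_zero hc hj),
    div_eq_div_iff hj (mul_ne_zero hc (mul_ne_zero hc hj))]
  linear_combination -c * (c * τ + d) * hdet

theorem moebius_eq_moebius_neg_one_div {τ : ℂ} (hτ : τ ≠ 0) (a b c d : ℂ) :
    (a * τ + b) / (c * τ + d) = (b * (-1 / τ) + -a) / (d * (-1 / τ) + -c) := by
  rw [← mul_div_mul_right _ _ (neg_ne_zero.2 (inv_ne_zero hτ))]
  congr 1 <;> field_simp <;> ring

namespace PosForm

variable {Q R : PosForm n} {N ν m : ℕ} {p p' : (Fin n → ℤ) → ℂ}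

theorem IsPoissonDual.theta_moebius (hR : Q.IsDual R N) (h : Q.IsPoissonDual R N ν p p')
    (hm : m ≠ 0) (u : Fin n → ℤ) {a b d : ℤ} {c : ℕ} [NeZero c] (hdet : a * d - b * c = 1) {τ : ℂ}
    (hτ : 0 < τ.im) :
    Q.theta ((coset u m).indicator p) ((a * τ + b) / (c * τ + d)) =
      ((c * τ + d) / (Complex.I * c * m ^ 2)) ^ (n / 2) * (-(c * τ + d) / m) ^ ν *
        R.theta (fun y => Q.dualPhase u m a c y * p' y) ((τ + d / c) / (N * m ^ 2)) := by
  have hc : (c : ℂ) ≠ 0 := by exact_mod_cast NeZero.ne c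
  have hm' : (m : ℂ) ≠ 0 := by exact_mod_cast hm
  have hN := hR.ne_zero
  have hpos := NeZero.pos c
  have hjim : 0 < (c * τ + d : ℂ).im := by
    rw [add_im, intCast_im, add_zero, ← ofReal_natCast, im_ofReal_mul]
    positivity
  have hwim : 0 < (c * (c * τ + d) : ℂ).im := by
    rw [← ofReal_natCast, im_ofReal_mul, ofReal_natCast]
    positivity
  have hj : (c * τ + d : ℂ) ≠ 0 := fun h => by simp [h] at hjim
  rw [div_eq_div_add_neg_one_div (by exact_mod_cast hdet) hc hj, h.theta_twist hR hm u a c hwim]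
  push_cast
  congr 1
  · congr 2 <;> field_simp
  · congr 1
    field_simp

/-- The quadratic Gauss sum of the form `Q` modulo `d`. -/
noncomputable def quadraticGaussSum (Q : PosForm n) (b : ℤ) (d : ℕ) [NeZero d] : ℂ :=
  ∑ s : Fin n → ZMod d, ZMod.stdAddChar ((b : ZMod d) * Q.eval s)

theorem IsDual.eval_gram_mulVec (h : Q.IsDual R N) (y : Fin n → ℤ) :
    Q.eval (R.gram *ᵥ y) = N * R.eval y := by
  have hR : R.gram.map (Int.cast : ℤ → ℤ) = R.gram := by ext; simp
  have h2 : (2 : ℤ) * Q.eval (R.gram *ᵥ y) = 2 * (N * R.eval y) := by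
    rw [two_mul_eval, mul_left_comm, two_mul_eval, ← hR, mulVec_mulVec, h.mul_map_gram, smul_mulVec,
      one_mulVec, dotProduct_smul, dotProduct_comm, smul_eq_mul]
    rfl
  exact mul_left_cancel₀ two_ne_zero h2

theorem sum_stdAddChar_eval_add_dotProduct (h : Q.IsDual R N) {d : ℕ} [NeZero d] {β c : ZMod d}
    (hβ : β * N * c = -1) (y : Fin n → ℤ) :
    ∑ s : Fin n → ZMod d, ZMod.stdAddChar (β * Q.eval s + s ⬝ᵥ toZMod d y) =
      ZMod.stdAddChar (c * R.eval (toZMod d y)) *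
        ∑ s : Fin n → ZMod d, ZMod.stdAddChar (β * Q.eval s) := by
  set x := R.gram.map Int.cast *ᵥ toZMod d y with hx
  have hQx : Q.eval x = N * R.eval (toZMod d y) := by
    rw [← intCast_eval, ← Int.cast_natCast N, ← Int.cast_mul, ← h.eval_gram_mulVec, intCast_eval]
    congr 1
    ext i
    simp [hx, toZMod, mulVec, dotProduct]
  have hgram : Q.gram.map Int.cast *ᵥ x = (N : ZMod d) • toZMod d y := by
    rw [hx, mulVec_mulVec, h.mul_map_gram, smul_mulVec, one_mulVec]
  have hxy : x ⬝ᵥ toZMod d y = 2 * R.eval (toZMod d y) := by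
    rw [two_mul_eval, dotProduct_comm]
  -- Complete the square by the translation `s ↦ s + c x`.
  rw [← Equiv.sum_comp (Equiv.addRight (c • x)), Finset.mul_sum]
  refine Finset.sum_congr rfl fun s _ => ?_
  rw [← AddChar.map_add_eq_mul]
  congr 1
  simp only [Equiv.coe_addRight, eval_add, eval_smul, mulVec_smul, hgram, add_dotProduct,
    dotProduct_smul, smul_dotProduct, hxy, hQx, smul_eq_mul]
  linear_combination (s ⬝ᵥ toZMod d y + c * R.eval (toZMod d y)) * hβ

theorem sum_stdAddChar_mul_sq_eval (Q : PosForm n) {d : ℕ} [NeZero d] {r : ZMod d} (hr : IsUnit r)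
    (b : ℤ) : ∑ s : Fin n → ZMod d, ZMod.stdAddChar ((b : ZMod d) * r ^ 2 * Q.eval s) =
      Q.quadraticGaussSum b d := by
  obtain ⟨r, rfl⟩ := hr
  refine Fintype.sum_equiv (MulAction.toPerm r) _ _ fun s => ?_
  rw [MulAction.toPerm_apply, Units.smul_def, eval_smul, mul_assoc]

theorem dualPhase_mul_smul (h : Q.IsDual R N) {a b c : ℤ} {d : ℕ} [NeZero d]
    (hdet : a * d - b * (m ^ 2 * N * c) = 1) (u y : Fin n → ℤ) :
    Q.dualPhase ((a * d) • u) m b d y = Q.quadraticGaussSum b d *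
      (expTwoPi (((a • u) ⬝ᵥ y : ℤ) / m) * expTwoPi (R.eval y * (c / d))) := by
  have hd : (d : ℂ) ≠ 0 := by exact_mod_cast NeZero.ne d
  have hβ : (b * m ^ 2 : ZMod d) * N * c = -1 := by
    have := congrArg (Int.cast : ℤ → ZMod d) hdet
    push_cast at this
    rw [ZMod.natCast_self, mul_zero] at this
    linear_combination -this
  have hunit : IsUnit (m : ZMod d) :=
    IsUnit.of_mul_eq_one (-(b * m * N * c)) (by linear_combination -hβ)
  have hu : toZMod d ((a * d) • u) = 0 := by
    rw [toZMod_smul]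
    simp
  have hphase : (((a * d) • u ⬝ᵥ y : ℤ) : ℂ) / (m * d : ℕ) = ((a • u) ⬝ᵥ y : ℤ) / m := by
    rw [mul_comm a, mul_smul, smul_dotProduct (d : ℤ), smul_eq_mul]
    push_cast
    rw [mul_comm (m : ℂ), mul_div_mul_left _ _ hd]
  simp only [dualPhase, hu, zero_add, eval_smul, ← mul_assoc (b : ZMod d)]
  rw [hphase, sum_stdAddChar_eval_add_dotProduct h hβ, sum_stdAddChar_mul_sq_eval Q hunit,
    ← mul_div_assoc, ← Int.cast_mul, expTwoPi_intCast_div _ d, Int.cast_mul,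
    intCast_eval, mul_comm (c : ZMod d)]
  ring

theorem IsDual.theta_dualPhase_mul (h : Q.IsDual R N) {a b c : ℤ} {d : ℕ} [NeZero d]
    (hdet : a * d - b * (m ^ 2 * N * c) = 1) (u : Fin n → ℤ) (p : (Fin n → ℤ) → ℂ) (z : ℂ) :
    R.theta (fun y => Q.dualPhase ((a * d) • u) m b d y * p y) (-(c / d) + z) =
      Q.quadraticGaussSum b d * R.theta (fun y => expTwoPi (((a • u) ⬝ᵥ y : ℤ) / m) * p y) z := by
  rw [theta_add, ← theta_const_mul]
  congr 1
  ext y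
  have hphase : expTwoPi (R.eval y * (c / d)) * expTwoPi (R.eval y * -(c / d)) = 1 := by
    rw [← expTwoPi_add, mul_neg, add_neg_cancel]
    simp [expTwoPi]
  rw [dualPhase_mul_smul h hdet]
  linear_combination (Q.quadraticGaussSum b d * expTwoPi (((a • u) ⬝ᵥ y : ℤ) / m) * p y) * hphase

theorem IsPoissonDual.theta_transform (hR : Q.IsDual R N) (h : Q.IsPoissonDual R N ν p p')
    (hm : m ≠ 0) (u : Fin n → ℤ) {a b c : ℤ} {d : ℕ} [NeZero d] (hdet : a * d - b * c = 1)
    (hc : (m ^ 2 * N : ℤ) ∣ c) {τ : ℂ} (hτ : 0 < τ.im) :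
    Q.theta ((coset ((a * d) • u) m).indicator p) ((a * τ + b) / (c * τ + d)) =
      Q.quadraticGaussSum b d / d ^ (n / 2) * (c * τ + d) ^ (n / 2 + ν) *
        Q.theta ((coset (a • u) m).indicator p) τ := by
  obtain ⟨c', rfl⟩ := hc
  have hd : (d : ℂ) ≠ 0 := by exact_mod_cast NeZero.ne d
  have hm' : (m : ℂ) ≠ 0 := by exact_mod_cast hm
  have hN := hR.ne_zero
  have hτ0 : τ ≠ 0 := fun h => by simp [h] at hτ
  have hτ' : -1 / (-1 / τ) = τ := by field_simp
  have hdual : (-1 / τ + (-(m ^ 2 * N * c') : ℤ) / d) / (N * m ^ 2 : ℂ) =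
      -(c' / d) + -1 / τ / (N * m ^ 2) := by
    push_cast
    field_simp
    ring
  have him : 0 < (-1 / τ).im := neg_one_div_im_pos hτ
  have hright := h.theta_coset (a • u) hm him
  rw [hτ'] at hright
  rw [moebius_eq_moebius_neg_one_div hτ0, ← Int.cast_neg, ← Int.cast_neg,
    h.theta_moebius hR hm _ (by linear_combination hdet) him, hdual, hR.theta_dualPhase_mul hdet,
    hright]
  generalize R.theta _ _ = T
  generalize n / 2 = k
  have hfactor : (d * (-1 / τ) + (-(m ^ 2 * N * c') : ℤ) : ℂ) =
      -1 / τ * ((m ^ 2 * N * c' : ℤ) * τ + d) := by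
    push_cast
    field_simp
    ring
  rw [hfactor, pow_add]
  generalize ((m ^ 2 * N * c' : ℤ) * τ + d : ℂ) = j
  rw [show -1 / τ * j / (Complex.I * d * m ^ 2) = -1 / τ / (Complex.I * m ^ 2) * j / d by ring,
    show -(-1 / τ * j) / m = -(-1 / τ) / m * j by ring]
  simp only [div_pow, mul_pow]
  ring

end PosForm

end Moebius

section Cusps

variable {n : ℕ}

theorem tendsto_comap_im_add_div (r : ℝ) {s : ℕ} (hs : s ≠ 0) :
    Tendsto (fun τ : ℂ => (τ + r) / s) (comap Complex.im atTop) (comap Complex.im atTop) := by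
  have hs' : (0 : ℝ) < s := by positivity
  rw [tendsto_comap_iff]
  refine (tendsto_comap.atTop_div_const hs').congr fun τ => ?_
  simp [div_natCast_im]

namespace PosForm

variable {Q R : PosForm n} {N ν m : ℕ} {p p' : (Fin n → ℤ) → ℂ}

theorem IsPoissonDual.exists_tendsto_of_pos (hR : Q.IsDual R N) (h : Q.IsPoissonDual R N ν p p')
    (hm : m ≠ 0) (u : Fin n → ℤ) {a b d : ℤ} {c : ℕ} [NeZero c] (hdet : a * d - b * c = 1) :
    ∃ L : ℂ, Tendsto (fun τ : ℂ => (c * τ + d) ^ (-((n / 2 + ν : ℕ) : ℤ)) *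
        Q.theta ((coset u m).indicator p) ((a * τ + b) / (c * τ + d)))
      (comap Complex.im atTop) (nhds L) ∧ (p' 0 = 0 → L = 0) := by
  set Φ : (Fin n → ℤ) → ℂ := fun y => Q.dualPhase u m a c y * p' y with hΦ
  have hs : N * m ^ 2 ≠ 0 := mul_ne_zero hR.pos.ne' (pow_ne_zero 2 hm)
  refine ⟨(1 / (Complex.I * c * m ^ 2)) ^ (n / 2) * (-1 / m) ^ ν * Φ 0, ?_, fun hp => ?_⟩
  · refine (((R.tendsto_theta (h.hasExpGrowth_dual.dualPhase_mul Q u m a c)).comp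
      (tendsto_comap_im_add_div (d / c) hs)).const_mul _).congr' ?_
    filter_upwards [tendsto_comap.eventually_gt_atTop (0 : ℝ)] with τ hτ
    have hj : (c * τ + d : ℂ) ≠ 0 := fun h => by
      have := congrArg Complex.im h
      simp [NeZero.ne c, hτ.ne'] at this
    have hneg : -(c * τ + d) / m = -1 / m * (c * τ + d : ℂ) := by ring
    rw [h.theta_moebius hR hm u hdet hτ, Function.comp_apply, _root_.zpow_neg, zpow_natCast,
      pow_add, hneg, mul_pow, div_pow _ _ (n / 2), div_pow _ _ (n / 2), one_pow]
    push_cast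
    field_simp
  · simp [hΦ, hp]

theorem exists_tendsto_of_zero (hp : HasExpGrowth p) (k : ℤ) (u : Fin n → ℤ) {a b d : ℤ}
    (hdet : a * d = 1) :
    ∃ L : ℂ, Tendsto (fun τ : ℂ => (d : ℂ) ^ k *
        Q.theta ((coset u m).indicator p) ((a * τ + b) / d))
      (comap Complex.im atTop) (nhds L) ∧ (p 0 = 0 → L = 0) := by
  refine ⟨(d : ℂ) ^ k * (coset u m).indicator p 0,
    ((Q.tendsto_theta (hp.indicator (coset u m))).const_mul _).congr fun τ => ?_,
    fun h => by simp [h]⟩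
  rw [← Q.theta_intCast_add _ (b * d) τ]
  congr 2
  rcases Int.mul_eq_one_iff_eq_one_or_neg_one.1 hdet with ⟨rfl, rfl⟩ | ⟨rfl, rfl⟩ <;>
  · push_cast
    ring

theorem IsPoissonDual.exists_tendsto (hR : Q.IsDual R N) (h : Q.IsPoissonDual R N ν p p')
    (hm : m ≠ 0) (u : Fin n → ℤ) {a b c d : ℤ} (hdet : a * d - b * c = 1) :
    ∃ L : ℂ, Tendsto (fun τ : ℂ => (c * τ + d) ^ (-((n / 2 + ν : ℕ) : ℤ)) *
        Q.theta ((coset u m).indicator p) ((a * τ + b) / (c * τ + d)))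
      (comap Complex.im atTop) (nhds L) ∧ (p 0 = 0 → p' 0 = 0 → L = 0) := by
  rcases lt_trichotomy c 0 with hc | rfl | hc
  · obtain ⟨c, rfl⟩ := Int.exists_eq_neg_ofNat hc.le
    have : NeZero c := ⟨by rintro rfl; simp at hc⟩
    obtain ⟨L, hL, h0⟩ := h.exists_tendsto_of_pos hR hm u (a := -a) (b := -b) (d := -d) (c := c)
      (by linear_combination hdet)
    refine ⟨_, (hL.const_mul ((-1) ^ (-((n / 2 + ν : ℕ) : ℤ)))).congr fun τ => ?_,
      fun _ hp => by rw [h0 hp, mul_zero]⟩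
    rw [← mul_assoc, ← mul_zpow]
    push_cast
    rw [← neg_div_neg_eq (_ + _)]
    ring_nf
  · obtain ⟨L, hL, h0⟩ := exists_tendsto_of_zero (Q := Q) (m := m) (b := b) h.hasExpGrowth
      (-((n / 2 + ν : ℕ) : ℤ)) u (by simpa using hdet)
    exact ⟨L, by simpa using hL, fun hp _ => h0 hp⟩
  · lift c to ℕ using hc.le
    have : NeZero c := ⟨by rintro rfl; simp at hc⟩
    obtain ⟨L, hL, h0⟩ := h.exists_tendsto_of_pos hR hm u hdet
    exact ⟨L, by simpa using hL, fun _ => h0⟩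

end PosForm

end Cusps

section QuadraticGaussSums

variable {F : Type*} [Field F] [Fintype F] [DecidableEq F]

/-- The quadratic character of a finite field, with complex values, as needed for `gaussSum`. -/
noncomputable def complexQuadraticChar (F : Type*) [Field F] [Fintype F] [DecidableEq F] :
    MulChar F ℂ :=
  (quadraticChar F).ringHomComp (Int.castRingHom ℂ)

theorem complexQuadraticChar_apply (a : F) :
    complexQuadraticChar F a = (quadraticChar F a : ℂ) := rfl

theorem complexQuadraticChar_sq {a : F} (ha : a ≠ 0) : complexQuadraticChar F (a ^ 2) = 1 := by
  rw [complexQuadraticChar_apply, quadraticChar_sq_one' ha, Int.cast_one]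

theorem isQuadratic_complexQuadraticChar : (complexQuadraticChar F).IsQuadratic :=
  (quadraticChar_isQuadratic F).comp (Int.castRingHom ℂ)

theorem sum_comp_sq (hF : ringChar F ≠ 2) (g : F → ℂ) :
    ∑ x, g (x ^ 2) = ∑ y, (complexQuadraticChar F y + 1) * g y := by
  rw [← Finset.sum_fiberwise Finset.univ (fun x : F => x ^ 2) fun x => g (x ^ 2)]
  refine Finset.sum_congr rfl fun y _ => ?_
  rw [Finset.sum_congr rfl fun x hx => congrArg g (Finset.mem_filter.1 hx).2, Finset.sum_const,
    nsmul_eq_mul]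
  have hcard := congrArg (Int.cast : ℤ → ℂ) (quadraticChar_card_sqrts hF y)
  simp only [Set.toFinset_ofPred] at hcard
  push_cast at hcard
  rw [hcard, complexQuadraticChar_apply]

theorem sum_addChar_mul_sq (hF : ringChar F ≠ 2) {ψ : AddChar F ℂ} (hψ : ψ.IsPrimitive) {a : F}
    (ha : a ≠ 0) :
    ∑ x, ψ (a * x ^ 2) = complexQuadraticChar F a * gaussSum (complexQuadraticChar F) ψ := by
  have hlinear : ∑ y, ψ (a * y) = 0 := by
    simpa [AddChar.mulShift_apply] using AddChar.sum_eq_zero_of_ne_one (hψ ha)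
  have hshift := gaussSum_mulShift_eq (complexQuadraticChar F) ψ (Units.mk0 a ha)
  rw [isQuadratic_complexQuadraticChar.inv, Units.val_mk0] at hshift
  rw [sum_comp_sq hF fun y => ψ (a * y), ← hshift]
  simp only [add_mul, one_mul, Finset.sum_add_distrib, hlinear, add_zero]
  rfl

theorem gaussSum_complexQuadraticChar_sq (hF : ringChar F ≠ 2) {ψ : AddChar F ℂ}
    (hψ : ψ.IsPrimitive) :
    gaussSum (complexQuadraticChar F) ψ ^ 2 =
      complexQuadraticChar F (-1) * Fintype.card F := by
  refine gaussSum_sq (fun h => ?_) isQuadratic_complexQuadraticChar hψ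
  obtain ⟨a, ha⟩ := quadraticChar_exists_neg_one' hF
  have h1 := DFunLike.congr_fun h (a : F)
  rw [complexQuadraticChar_apply, ha, MulChar.one_apply_coe] at h1
  norm_num at h1

theorem exists_transpose_mul_mul_eq_diagonal {F : Type*} [Field F] (hF : ringChar F ≠ 2) {n : ℕ}
    {M : Matrix (Fin n) (Fin n) F} (hM : M.IsSymm) :
    ∃ (P : Matrix (Fin n) (Fin n) F) (d : Fin n → F), IsUnit P.det ∧ Pᵀ * M * P = diagonal d := by
  have : Invertible (2 : F) := invertibleOfNonzero (Ring.two_ne_zero hF)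
  have hsymm : LinearMap.IsSymm (Matrix.toBilin' M) := ⟨fun x y => by
    simp only [Matrix.toBilin'_apply', RingHom.id_apply]
    rw [dotProduct_mulVec, ← mulVec_transpose, hM.eq, dotProduct_comm]⟩
  obtain ⟨v, hv⟩ := LinearMap.BilinForm.exists_orthogonal_basis hsymm
  let w := v.reindex (finCongr (Module.finrank_fin_fun F))
  have := (Pi.basisFun F (Fin n)).invertibleToMatrix w
  refine ⟨(Pi.basisFun F (Fin n)).toMatrix w, fun i => w i ⬝ᵥ M *ᵥ w i,
    (Matrix.isUnit_iff_isUnit_det _).1 (isUnit_of_invertible _), ?_⟩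
  ext i j
  have hentry : (((Pi.basisFun F (Fin n)).toMatrix w)ᵀ * M * (Pi.basisFun F (Fin n)).toMatrix w) i j
      = w i ⬝ᵥ M *ᵥ w j := by
    rw [Matrix.mul_assoc, Matrix.mul_apply']
    rfl
  rw [hentry, diagonal_apply]
  split_ifs with h
  · rw [h]
  · simpa [w, Matrix.toBilin'_apply'] using
      LinearMap.isOrthoᵢ_def.1 hv (finCongr (Module.finrank_fin_fun F).symm i)
        (finCongr (Module.finrank_fin_fun F).symm j) (by simpa using h)

theorem sum_addChar_diagonal (hF : ringChar F ≠ 2) {ψ : AddChar F ℂ} (hψ : ψ.IsPrimitive) {n : ℕ}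
    {d : Fin n → F} (hd : ∀ i, d i ≠ 0) :
    ∑ x : Fin n → F, ψ (x ⬝ᵥ diagonal d *ᵥ x) =
      complexQuadraticChar F (∏ i, d i) * gaussSum (complexQuadraticChar F) ψ ^ n := by
  have hprod (x : Fin n → F) : ψ (x ⬝ᵥ diagonal d *ᵥ x) = ∏ i, ψ (d i * x i ^ 2) := by
    rw [dotProduct, Finset.sum_congr rfl fun i _ =>
      show x i * (diagonal d *ᵥ x) i = d i * x i ^ 2 by rw [mulVec_diagonal]; ring]
    exact map_prod ψ.toMonoidHom (fun i => Multiplicative.ofAdd (d i * x i ^ 2)) Finset.univ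
  simp only [hprod]
  rw [← Fintype.piFinset_univ, ← Finset.prod_univ_sum (fun _ => Finset.univ)
    fun i x => ψ (d i * x ^ 2)]
  simp only [sum_addChar_mul_sq hF hψ (hd _), Finset.prod_mul_distrib, Finset.prod_const,
    Finset.card_univ, Fintype.card_fin, map_prod]

theorem sum_addChar_form (hF : ringChar F ≠ 2) {ψ : AddChar F ℂ} (hψ : ψ.IsPrimitive) {n : ℕ}
    (hn : Even n) {M : Matrix (Fin n) (Fin n) F} (hM : M.IsSymm) (hdet : M.det ≠ 0) :
    ∑ x : Fin n → F, ψ (x ⬝ᵥ M *ᵥ x) =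
      complexQuadraticChar F ((-1) ^ (n / 2) * M.det) * (Fintype.card F : ℂ) ^ (n / 2) := by
  obtain ⟨P, d, hP, hd⟩ := exists_transpose_mul_mul_eq_diagonal hF hM
  have hprod : P.det ^ 2 * M.det = ∏ i, d i := by
    rw [← det_diagonal, ← hd, det_mul, det_mul, det_transpose]; ring
  have hne (i) : d i ≠ 0 := Finset.prod_ne_zero_iff.1
    (hprod ▸ mul_ne_zero (pow_ne_zero 2 hP.ne_zero) hdet) i (Finset.mem_univ i)
  have hbij : Function.Bijective fun x : Fin n → F => P *ᵥ x :=
    (Matrix.mulVec_injective_iff_isUnit.2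
      ((Matrix.isUnit_iff_isUnit_det _).2 hP)).bijective_of_finite
  have hsubst (x : Fin n → F) : (P *ᵥ x) ⬝ᵥ M *ᵥ (P *ᵥ x) = x ⬝ᵥ diagonal d *ᵥ x := by
    rw [← hd, dotProduct_comm, dotProduct_mulVec, dotProduct_comm, ← mulVec_transpose,
      mulVec_mulVec, mulVec_mulVec, Matrix.mul_assoc]
  have hgauss : gaussSum (complexQuadraticChar F) ψ ^ n =
      (complexQuadraticChar F (-1) * Fintype.card F) ^ (n / 2) := by
    rw [← gaussSum_complexQuadraticChar_sq hF hψ, ← pow_mul, Nat.mul_div_cancel' hn.two_dvd]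
  rw [← hbij.sum_comp fun x => ψ (x ⬝ᵥ M *ᵥ x)]
  simp only [hsubst]
  rw [sum_addChar_diagonal hF hψ hne, ← hprod, hgauss, map_mul, map_mul,
    complexQuadraticChar_sq hP.ne_zero, map_pow]
  ring

end QuadraticGaussSums

section KroneckerSymbol

theorem exists_odd_prime_modEq {q d : ℤ} (hq : q ≠ 0) (hd : IsCoprime d q) :
    ∃ p : ℕ, p.Prime ∧ Odd p ∧ p ≡ d [ZMOD q] := by
  have hq' : (q.natAbs : ℤ) = q ∨ (q.natAbs : ℤ) = -q := by omega
  have hd' : IsCoprime d (q.natAbs : ℤ) := by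
    rcases hq' with h | h <;> rw [h]
    exacts [hd, hd.neg_right]
  obtain ⟨p, hp2, hp, h⟩ :=
    Nat.forall_exists_prime_gt_and_zmodEq 2 (Int.natAbs_ne_zero.2 hq) hd'
  exact ⟨p, hp, hp.odd_of_ne_two hp2.ne', Int.modEq_of_dvd (Int.natAbs_dvd.1 h.dvd)⟩

theorem jacobiSym_of_one_mod_four {D : ℤ} (hD : D % 4 = 1) {b : ℕ} (hb : Odd b) :
    jacobiSym D b = jacobiSym b D.natAbs := by
  rcases le_total 0 D with h | h
  · obtain ⟨k, rfl⟩ := Int.eq_ofNat_of_zero_le h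
    rw [Int.natAbs_natCast]
    exact jacobiSym.quadratic_reciprocity_one_mod_four (by omega) hb
  · obtain ⟨k, hk⟩ := Int.eq_ofNat_of_zero_le (neg_nonneg.2 h)
    obtain rfl : D = -(k : ℤ) := by omega
    have hk4 : k % 4 = 3 := by omega
    have hko : Odd k := Nat.odd_iff.2 (by omega)
    rw [Int.natAbs_neg, Int.natAbs_natCast, jacobiSym.neg _ hb]
    rcases Nat.odd_mod_four_iff.1 (Nat.odd_iff.1 hb) with h1 | h3
    · rw [ZMod.χ₄_nat_one_mod_four h1, one_mul,
        jacobiSym.quadratic_reciprocity_one_mod_four' hko h1]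
    · rw [ZMod.χ₄_nat_three_mod_four h3, jacobiSym.quadratic_reciprocity_three_mod_four hk4 h3]
      ring

theorem jacobiSym_of_three_mod_four {D : ℤ} (hD : D % 4 = 3) {b : ℕ} (hb : b % 4 = 3) :
    jacobiSym D b = -jacobiSym b D.natAbs := by
  have hbo : Odd b := Nat.odd_iff.2 (by omega)
  have h := jacobiSym_of_one_mod_four (show -D % 4 = 1 by omega) hbo
  rw [jacobiSym.neg _ hbo, ZMod.χ₄_nat_three_mod_four hb, Int.natAbs_neg] at h
  linarith

theorem exists_prime_jacobiSym_eq_neg_one {D N : ℤ} (hD : D % 4 = 3) (hN : Odd N) :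
    ∃ p : ℕ, p.Prime ∧ Odd p ∧ p ≡ 1 [ZMOD N] ∧ jacobiSym D p = -1 := by
  have hM : Odd (N * D) := hN.mul (Int.odd_iff.2 (by omega))
  have hM0 : N * D ≠ 0 := fun h => by simp [h] at hM
  have h2 : 1 + 2 * (N * D) ≡ 1 [ZMOD N * D] := by simp [Int.modEq_iff_dvd]
  obtain ⟨p, hp, hpo, h⟩ := exists_odd_prime_modEq (q := 4 * (N * D)) (d := 1 + 2 * (N * D))
    (by simpa using hM0) ⟨1 - 2 * (N * D), N * D, by ring⟩
  have hp4 : p % 4 = 3 := by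
    have h4 := h.of_mul_right (N * D)
    have hM2 := Int.odd_iff.1 hM
    rw [Int.ModEq] at h4
    omega
  have hp1 : p ≡ 1 [ZMOD N * D] := (h.of_mul_left 4).trans h2
  refine ⟨p, hp, hpo, hp1.of_mul_right D, ?_⟩
  have hpD : p ≡ 1 [ZMOD D.natAbs] :=
    Int.modEq_of_dvd (Int.natAbs_dvd.2 (hp1.of_mul_left N).dvd)
  rw [jacobiSym_of_three_mod_four hD hp4, jacobiSym.mod_left' hpD, jacobiSym.one_left]

theorem kronecker_of_odd (D : ℤ) {d : ℕ} (hd : Odd d) : kronecker D d = jacobiSym D d := by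
  have h0 : (d : ℤ) ≠ 0 := by exact_mod_cast hd.pos.ne'
  have hv : padicValNat 2 d = 0 := padicValNat.eq_zero_of_not_dvd hd.not_two_dvd_nat
  rw [_root_.kronecker, if_neg h0, if_neg (by omega), Int.natAbs_natCast, hv]
  simp

theorem kronTwo_eq_jacobiSym {D : ℤ} (hD : D % 4 = 1) : kronTwo D = jacobiSym 2 D.natAbs := by
  have ho : Odd D.natAbs := Nat.odd_iff.2 (by omega)
  rw [jacobiSym.at_two ho, ZMod.χ₈_nat_eq_if_mod_eight, kronTwo]
  split_ifs <;> omega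

theorem kronecker_zero_right {D : ℤ} (hD : D ≠ 0) : kronecker D 0 = jacobiSym 0 D.natAbs := by
  rw [_root_.kronecker, if_pos rfl]
  split_ifs with h
  · rcases h with rfl | rfl <;> simp
  · exact (jacobiSym.zero_left (by omega)).symm

theorem kronecker_of_one_mod_four {D : ℤ} (hD : D % 4 = 1) (d : ℕ) :
    kronecker D d = jacobiSym d D.natAbs := by
  rcases eq_or_ne d 0 with rfl | hd
  · exact kronecker_zero_right fun h => by simp [h] at hD
  obtain ⟨v, d', hd', rfl⟩ := Nat.exists_eq_two_pow_mul_odd hd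
  have hv : padicValNat 2 (2 ^ v * d') = v := by
    rw [padicValNat.mul (by positivity) hd'.pos.ne', padicValNat.prime_pow,
      padicValNat.eq_zero_of_not_dvd hd'.not_two_dvd_nat, add_zero]
  rw [_root_.kronecker, if_neg (by exact_mod_cast hd), if_neg (by omega), Int.natAbs_natCast, hv,
    Nat.mul_div_cancel_left _ (by positivity), jacobiSym_of_one_mod_four hD hd',
    kronTwo_eq_jacobiSym hD]
  push_cast
  rw [jacobiSym.mul_left, jacobiSym.pow_left, one_mul]

theorem kronecker_of_neg {D d : ℤ} (hd : d < 0) :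
    kronecker D d = (if D < 0 then -1 else 1) * kronecker D (-d) := by
  rw [_root_.kronecker, _root_.kronecker, if_neg hd.ne, if_neg (neg_ne_zero.2 hd.ne),
    Int.natAbs_neg, if_neg (show ¬(-d < 0 ∧ D < 0) by omega)]
  simp only [hd, true_and, one_mul, mul_assoc]

theorem exists_prime_jacobiSym_eq_kronecker {D c : ℤ} {d : ℕ} (hD : D ≠ 0) (hc : c ≠ 0)
    (hdD : IsCoprime (d : ℤ) D) (hdc : IsCoprime (d : ℤ) c) (h : Odd d ∨ D % 4 = 1) :
    ∃ p : ℕ, p.Prime ∧ Odd p ∧ p ≡ d [ZMOD c] ∧ jacobiSym D p = kronecker D d := by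
  rcases h with ho | h4
  · have hd4 : IsCoprime (d : ℤ) 4 :=
      Nat.isCoprime_iff_coprime.2 ((Nat.coprime_two_right.2 ho).pow_right 2)
    obtain ⟨p, hp, hpo, hpd⟩ := exists_odd_prime_modEq
      (mul_ne_zero (mul_ne_zero four_ne_zero hD) hc) ((hd4.mul_right hdD).mul_right hdc)
    refine ⟨p, hp, hpo, hpd.of_mul_left _, ?_⟩
    have hmod : p ≡ d [MOD 4 * D.natAbs] := by
      rw [← Int.natCast_modEq_iff, Int.modEq_iff_dvd]
      simpa [← Int.natAbs_dvd_natAbs, Int.natAbs_mul, Int.natAbs_abs] using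
        (hpd.of_mul_right c).dvd
    rw [kronecker_of_odd _ ho, jacobiSym.mod_right _ ho, jacobiSym.mod_right _ hpo, hmod]
  · obtain ⟨p, hp, hpo, hpd⟩ := exists_odd_prime_modEq (mul_ne_zero hD hc) (hdD.mul_right hdc)
    refine ⟨p, hp, hpo, hpd.of_mul_left _, ?_⟩
    have hmod : p ≡ d [ZMOD D.natAbs] :=
      Int.modEq_of_dvd (Int.natAbs_dvd.2 (hpd.of_mul_right c).dvd)
    rw [jacobiSym_of_one_mod_four h4 hpo, jacobiSym.mod_left' hmod, kronecker_of_one_mod_four h4]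

end KroneckerSymbol

section Discriminant

namespace PosForm

variable {n : ℕ} (Q : PosForm n)

/-- The discriminant `(-1)^(n/2) det A` of a form in an even number `n` of variables. -/
def disc : ℤ := (-1) ^ (n / 2) * Q.gram.det

theorem det_gram_pos : 0 < Q.gram.det := by
  have h := Q.posDef_gram.det_pos
  rw [← Int.cast_det Q.gram] at h
  exact_mod_cast h

theorem disc_ne_zero : Q.disc ≠ 0 := mul_ne_zero (pow_ne_zero _ (by norm_num)) Q.det_gram_pos.ne'

theorem sign_disc : (if Q.disc < 0 then (-1 : ℤ) else 1) = (-1) ^ (n / 2) := by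
  have h := Q.det_gram_pos
  rcases neg_one_pow_eq_or ℤ (n / 2) with e | e
  · rw [e, disc, e, if_neg (by linarith)]
  · rw [e, disc, e, if_pos (by linarith)]

theorem quadraticGaussSum_one (b : ℤ) : Q.quadraticGaussSum b 1 = 1 := by
  simp [quadraticGaussSum, Subsingleton.elim _ (0 : ZMod 1)]

theorem quadraticGaussSum_prime (hn : Even n) {p : ℕ} [Fact p.Prime] (hp : Odd p) {b : ℤ}
    (hb : (b : ZMod p) ≠ 0) (hdet : (Q.gram.det : ZMod p) ≠ 0) :
    Q.quadraticGaussSum b p = (jacobiSym Q.disc p : ℂ) * (p : ℂ) ^ (n / 2) := by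
  have hF : ringChar (ZMod p) ≠ 2 := by
    rw [ZMod.ringChar_zmod_n]
    rintro rfl
    exact absurd hp (by decide)
  have h2 : (2 : ZMod p) ≠ 0 := Ring.two_ne_zero hF
  have hk : (b : ZMod p) * 2⁻¹ ≠ 0 := mul_ne_zero hb (inv_ne_zero h2)
  set M : Matrix (Fin n) (Fin n) (ZMod p) := ((b : ZMod p) * 2⁻¹) • Q.gram.map Int.cast with hM
  have hMdet : M.det = (((b : ZMod p) * 2⁻¹) ^ (n / 2)) ^ 2 * Q.gram.det := by
    rw [hM, det_smul, Fintype.card_fin, ← pow_mul, Nat.div_mul_cancel hn.two_dvd, Int.cast_det]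
  have hterm (s : Fin n → ZMod p) : (b : ZMod p) * Q.eval s = s ⬝ᵥ M *ᵥ s := by
    rw [hM, smul_mulVec, dotProduct_smul, ← two_mul_eval, smul_eq_mul]
    field_simp
  have hsum := sum_addChar_form hF (ZMod.isPrimitive_stdAddChar p) hn
    ((Q.isSymm_gram.map _).smul _ : M.IsSymm)
    (hMdet ▸ mul_ne_zero (pow_ne_zero _ (pow_ne_zero _ hk)) hdet)
  rw [hMdet, mul_left_comm, map_mul, complexQuadraticChar_sq (pow_ne_zero _ hk), one_mul,
    complexQuadraticChar_apply, ZMod.card] at hsum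
  rw [quadraticGaussSum, Finset.sum_congr rfl fun s _ => by rw [hterm], hsum,
    ← jacobiSym.legendreSym.to_jacobiSym, legendreSym, disc]
  push_cast
  rfl

variable {Q} {R : PosForm n} {N : ℕ}

theorem IsDual.disc_dvd (hR : Q.IsDual R N) : Q.disc ∣ (N : ℤ) ^ n := by
  refine (IsUnit.mul_left_dvd (IsUnit.pow _ (by decide))).2 ⟨R.gram.det, ?_⟩
  rw [← det_mul, hR.mul_gram, det_smul, det_one, Fintype.card_fin, mul_one]

theorem IsDual.isCoprime_disc (hR : Q.IsDual R N) {d c : ℤ} (hdc : IsCoprime d c)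
    (hc : (N : ℤ) ∣ c) : IsCoprime d Q.disc :=
  ((hdc.of_isCoprime_of_dvd_right hc).pow_right).of_isCoprime_of_dvd_right hR.disc_dvd

end PosForm

end Discriminant

section Nebentypus

variable {n : ℕ}

theorem coset_smul {m : ℕ} {a : ℤ} (ha : a ≡ 1 [ZMOD m]) (u : Fin n → ℤ) :
    coset (a • u) m = coset u m :=
  coset_congr fun i => by
    rw [Pi.smul_apply, smul_eq_mul, ← sub_one_mul]
    exact ha.symm.dvd.mul_right _

theorem coset_one (u : Fin n → ℤ) : coset u 1 = Set.univ :=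
  Set.eq_univ_of_forall fun x i => by simp

namespace PosForm

variable {Q R : PosForm n} {N ν m : ℕ} {p p' : (Fin n → ℤ) → ℂ}

theorem IsPoissonDual.theta_transform_prime (hn : Even n) (hR : Q.IsDual R N)
    (h : Q.IsPoissonDual R N ν p p') (hm : m ≠ 0) (u : Fin n → ℤ) {a b c d : ℤ}
    (hdet : a * d - b * c = 1) (hc : (m ^ 2 * N : ℤ) ∣ c) {q : ℕ} (hq : q.Prime) (hq2 : Odd q)
    (hqd : q ≡ d [ZMOD c]) {τ : ℂ} (hτ : 0 < τ.im) :
    Q.theta ((coset u m).indicator p) ((a * τ + b) / (c * τ + d)) =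
      jacobiSym Q.disc q * (c * τ + d) ^ (n / 2 + ν) *
        Q.theta ((coset (a • u) m).indicator p) τ := by
  have := Fact.mk hq
  obtain ⟨j, hj⟩ := hqd.symm.dvd
  have hdet' : a * q - (b + j * a) * c = 1 := by linear_combination hdet + a * hj
  have hNc : (N : ℤ) ∣ c := (Dvd.intro_left _ rfl).trans hc
  have hmc : (m : ℤ) ∣ c := (Dvd.intro (m * N : ℤ) (by ring)).trans hc
  have hqI : Prime (q : ℤ) := Nat.prime_iff_prime_int.1 hq
  have hb : ((b + j * a : ℤ) : ZMod q) ≠ 0 := fun h0 => by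
    have h1 := congrArg (Int.cast : ℤ → ZMod q) hdet'
    rw [Int.cast_sub, Int.cast_mul _ c, h0] at h1
    simp at h1
  have hgram : (Q.gram.det : ZMod q) ≠ 0 := fun h0 => hqI.not_isUnit <|
    (hR.isCoprime_disc ⟨a, -(b + j * a), by linear_combination hdet'⟩ hNc).isUnit_of_dvd' dvd_rfl
      (((ZMod.intCast_zmod_eq_zero_iff_dvd _ _).1 h0).mul_left _)
  have hcoset : coset ((a * q : ℤ) • u) m = coset u m := coset_smul
    (Int.modEq_of_dvd (hmc.trans ⟨-(b + j * a), by linear_combination -hdet'⟩)) u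
  have key := h.theta_transform hR hm u hdet' hc (τ := τ - j) (by simpa using hτ)
  have hpow : (q : ℂ) ^ (n / 2) ≠ 0 := pow_ne_zero _ (by exact_mod_cast hq.ne_zero)
  have hjC := congrArg (Int.cast : ℤ → ℂ) hj
  push_cast at hjC
  have hnum : (a : ℂ) * (τ - j) + (b + j * a : ℤ) = a * τ + b := by push_cast; ring
  have hden : (c : ℂ) * (τ - j) + q = c * τ + d := by linear_combination hjC
  rwa [hcoset, Q.quadraticGaussSum_prime hn hq2 hb hgram, hnum, hden,
    mul_div_cancel_right₀ _ hpow, ← Q.theta_intCast_add _ j (τ - j), add_sub_cancel] at key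

theorem theta_one_ne_zero (h1 : HasExpGrowth fun _ : Fin n → ℤ => 1) :
    Q.theta (fun _ => 1) Complex.I ≠ 0 := by
  have hterm (x : Fin n → ℤ) : (1 : ℂ) * expTwoPi (Q.eval x * Complex.I) =
      (Real.exp (-(2 * π * Q.eval x)) : ℝ) := by
    rw [one_mul, expTwoPi, ofReal_exp]
    congr 1
    push_cast
    linear_combination (2 * π * Q.eval x : ℂ) * Complex.I_mul_I
  have hsum := Q.summable_theta h1 (z := Complex.I) (by simp)
  simp only [theta, hterm, ← ofReal_tsum, ofReal_ne_zero, summable_ofReal] at hsum ⊢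
  exact (hsum.tsum_pos (fun x => (Real.exp_pos _).le) 0 (Real.exp_pos _)).ne'

/- The substitution `τ ↦ τ / (N τ + 1)` has multiplier `1`, as the Gauss sum modulo `1` is trivial,
but also the Legendre symbol at `q`; the two can be compared because `θ(i)` is nonzero. -/
theorem IsDual.jacobiSym_disc_eq_one (hn : Even n) (hR : Q.IsDual R N) {q : ℕ} (hq : q.Prime)
    (hq2 : Odd q) (hqN : q ≡ 1 [ZMOD N]) : jacobiSym Q.disc q = 1 := by
  obtain ⟨p', h, -⟩ := IsSpherical.exists_isPoissonDual hn hR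
    (.inl ⟨rfl, 1, rfl⟩ : IsSpherical Q.gram 0 fun _ => 1)
  have hone := h.theta_transform hR one_ne_zero 0 (a := 1) (b := 0) (c := N) (d := 1)
    (by simp) (by simp) (τ := Complex.I) (by simp)
  have hprime := h.theta_transform_prime hn hR one_ne_zero 0 (a := 1) (b := 0) (c := N) (d := 1)
    (by simp) (by simp) hq hq2 hqN (τ := Complex.I) (by simp)
  have hden : ((N : ℂ) * Complex.I + 1) ^ (n / 2 + 0) ≠ 0 :=
    pow_ne_zero _ fun h0 => by simpa using congrArg Complex.re h0
  simp only [coset_one, Set.indicator_univ, quadraticGaussSum_one, Nat.cast_one, Int.cast_one,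
    Int.cast_natCast, one_pow, div_one, one_mul] at hone hprime
  rw [hone] at hprime
  have hjac := mul_right_cancel₀ hden <|
    (one_mul _).trans (mul_right_cancel₀ (Q.theta_one_ne_zero h.hasExpGrowth) hprime)
  exact_mod_cast hjac.symm

theorem IsDual.disc_mod_four (hn : Even n) (hR : Q.IsDual R N) (hN : Odd N) : Q.disc % 4 = 1 := by
  have hD : Odd Q.disc := by
    obtain ⟨k, hk⟩ := hR.disc_dvd
    exact Int.Odd.of_mul_left (hk ▸ Odd.pow (by exact_mod_cast hN))
  have hD2 := Int.odd_iff.1 hD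
  rcases (by omega : Q.disc % 4 = 1 ∨ Q.disc % 4 = 3) with h | h
  · exact h
  · obtain ⟨q, hq, hq2, hqN, hjac⟩ :=
      exists_prime_jacobiSym_eq_neg_one h (show Odd (N : ℤ) by exact_mod_cast hN)
    rw [hR.jacobiSym_disc_eq_one hn hq hq2 hqN] at hjac
    norm_num at hjac

theorem IsDual.odd_or_disc_mod_four (hn : Even n) (hR : Q.IsDual R N) {d : ℕ} {c : ℤ}
    (hdc : IsCoprime (d : ℤ) c) (hc : (N : ℤ) ∣ c) : Odd d ∨ Q.disc % 4 = 1 := by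
  refine d.even_or_odd.symm.imp_right fun hd => hR.disc_mod_four hn ?_
  have hdN : d.Coprime N := Nat.isCoprime_iff_coprime.1 (hdc.of_isCoprime_of_dvd_right hc)
  exact Nat.coprime_two_left.1 (hdN.coprime_dvd_left hd.two_dvd)

theorem IsPoissonDual.theta_modular_of_nonneg (hn : Even n) (hR : Q.IsDual R N)
    (h : Q.IsPoissonDual R N ν p p') (hm : m ≠ 0) (u : Fin n → ℤ) {a b c : ℤ} {d : ℕ}
    (hdet : a * d - b * c = 1) (hc : (m ^ 2 * N : ℤ) ∣ c) {τ : ℂ} (hτ : 0 < τ.im) :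
    Q.theta ((coset u m).indicator p) ((a * τ + b) / (c * τ + d)) =
      kronecker Q.disc d * (c * τ + d) ^ (n / 2 + ν) *
        Q.theta ((coset (a • u) m).indicator p) τ := by
  rcases eq_or_ne c 0 with rfl | hc0
  · obtain ⟨rfl, rfl⟩ : a = 1 ∧ d = 1 := by
      have hd := Int.eq_one_or_neg_one_of_mul_eq_one' (by simpa using hdet)
      omega
    have key := h.theta_transform hR hm u (d := 1) hdet hc hτ
    rw [quadraticGaussSum_one] at key
    rw [kronecker_of_odd Q.disc odd_one]
    simpa using key
  · have hNc : (N : ℤ) ∣ c := (Dvd.intro_left _ rfl).trans hc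
    have hdc : IsCoprime (d : ℤ) c := ⟨a, -b, by linear_combination hdet⟩
    obtain ⟨q, hq, hq2, hqd, hk⟩ := exists_prime_jacobiSym_eq_kronecker Q.disc_ne_zero hc0
      (hR.isCoprime_disc hdc hNc) hdc (hR.odd_or_disc_mod_four hn hdc hNc)
    have key := h.theta_transform_prime hn hR hm u hdet hc hq hq2 hqd hτ
    rwa [hk, Int.cast_natCast] at key

theorem theta_coset_neg {σ : ℂ} (hp : ∀ x, p (-x) = σ * p x) (u : Fin n → ℤ) (z : ℂ) :
    Q.theta ((coset (-u) m).indicator p) z = σ * Q.theta ((coset u m).indicator p) z := by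
  classical
  rw [← Q.theta_comp_neg, ← theta_const_mul]
  congr 1
  ext x
  simp only [Set.indicator_apply, hp, mul_ite, mul_zero, neg_mem_coset, neg_neg]

theorem IsPoissonDual.theta_modular (hn : Even n) (hR : Q.IsDual R N)
    (h : Q.IsPoissonDual R N ν p p') (hp : ∀ x, p (-x) = (-1) ^ ν * p x) (hm : m ≠ 0)
    (u : Fin n → ℤ) {a b c d : ℤ} (hdet : a * d - b * c = 1) (hc : (m ^ 2 * N : ℤ) ∣ c)
    (ha : a ≡ 1 [ZMOD m]) {τ : ℂ} (hτ : 0 < τ.im) :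
    Q.theta ((coset u m).indicator p) ((a * τ + b) / (c * τ + d)) =
      kronecker Q.disc d * (c * τ + d) ^ (n / 2 + ν) *
        Q.theta ((coset u m).indicator p) τ := by
  rcases le_or_gt 0 d with hd | hd
  · obtain ⟨d, rfl⟩ := Int.eq_ofNat_of_zero_le hd
    rw [Int.cast_natCast, h.theta_modular_of_nonneg hn hR hm u hdet hc hτ, coset_smul ha]
  · obtain ⟨e, he⟩ := Int.eq_ofNat_of_zero_le (neg_nonneg.2 hd.le)
    obtain rfl : d = -e := by omega
    have key := h.theta_modular_of_nonneg hn hR hm u (a := -a) (b := -b) (c := -c) (d := e)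
      (by linear_combination hdet) hc.neg_right hτ
    have hnum : ((-a : ℤ) * τ + (-b : ℤ) : ℂ) = -(a * τ + b) := by push_cast; ring
    have hden : ((-c : ℤ) * τ + e : ℂ) = -(c * τ + (-e : ℤ)) := by push_cast; ring
    have hsign : ((-1 : ℂ) ^ ν) * (-1) ^ ν = 1 := by rw [← mul_pow]; simp
    rw [hnum, hden, neg_div_neg_eq, _root_.neg_smul, theta_coset_neg hp, coset_smul ha,
      neg_pow (_ * _ + _), pow_add (-1 : ℂ)] at key
    rw [key, kronecker_of_neg hd, Q.sign_disc, neg_neg]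
    push_cast
    linear_combination ((kronecker Q.disc e : ℂ) * (-1) ^ (n / 2) * (c * τ + -e) ^ (n / 2 + ν) *
      Q.theta ((coset u m).indicator p) τ) * hsign

end PosForm

end Nebentypus

section IntegralMatrices

variable {n : ℕ}

theorem dotProduct_mulVec_nonneg_of_int {M : Matrix (Fin n) (Fin n) ℝ}
    (hM : ∀ z : Fin n → ℤ, 0 ≤ toReal z ⬝ᵥ M *ᵥ toReal z) (x : Fin n → ℝ) : 0 ≤ x ⬝ᵥ M *ᵥ x := by
  have hdense : DenseRange (Pi.map fun _ : Fin n => (Rat.cast : ℚ → ℝ)) :=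
    DenseRange.piMap fun _ => Rat.denseRange_cast
  refine hdense.induction_on (p := fun x => 0 ≤ x ⬝ᵥ M *ᵥ x) x
    (isClosed_le continuous_const (by fun_prop)) fun q => ?_
  obtain ⟨b, hb⟩ := IsLocalization.exist_integer_multiples_of_finite (nonZeroDivisors ℤ) q
  choose z hz using hb
  have hb0 : ((b : ℤ) : ℝ) ≠ 0 := by exact_mod_cast nonZeroDivisors.ne_zero b.2
  have hzq : toReal z = ((b : ℤ) : ℝ) • Pi.map (fun _ => Rat.cast) q := by
    ext i
    have hi := congrArg (Rat.cast : ℚ → ℝ) (hz i)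
    simpa [toReal] using hi
  have h := hM z
  rw [hzq, mulVec_smul, dotProduct_smul, smul_dotProduct, smul_eq_mul, smul_eq_mul, ← mul_assoc,
    ← sq] at h
  exact nonneg_of_mul_nonneg_right h (by positivity)

theorem det_ne_zero_of_dotProduct_mulVec_pos {A : Matrix (Fin n) (Fin n) ℤ}
    (hpos : ∀ x : Fin n → ℤ, x ≠ 0 → 0 < x ⬝ᵥ A *ᵥ x) : A.det ≠ 0 := fun h => by
  obtain ⟨v, hv, hv0⟩ := exists_mulVec_eq_zero_iff.2 h
  simpa [hv0] using hpos v hv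

theorem posDef_map_intCast {A : Matrix (Fin n) (Fin n) ℤ} (hA : A.IsSymm)
    (hpos : ∀ x : Fin n → ℤ, x ≠ 0 → 0 < x ⬝ᵥ A *ᵥ x) : (A.map (Int.cast : ℤ → ℝ)).PosDef := by
  have hint (z : Fin n → ℤ) : 0 ≤ toReal z ⬝ᵥ A.map (Int.cast : ℤ → ℝ) *ᵥ toReal z := by
    have h : toReal z ⬝ᵥ A.map (Int.cast : ℤ → ℝ) *ᵥ toReal z = (z ⬝ᵥ A *ᵥ z : ℤ) := by
      simp [toReal, dotProduct, mulVec]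
    rw [h, Int.cast_nonneg_iff]
    rcases eq_or_ne z 0 with rfl | hz
    · simp
    · exact (hpos z hz).le
  have hunit : IsUnit (A.map (Int.cast : ℤ → ℝ)) := by
    rw [isUnit_iff_isUnit_det, isUnit_iff_ne_zero, ← Int.cast_det A, Int.cast_ne_zero]
    exact det_ne_zero_of_dotProduct_mulVec_pos hpos
  have hherm : (A.map (Int.cast : ℤ → ℝ)).IsHermitian := by
    rw [IsHermitian, conjTranspose_eq_transpose_of_trivial, (hA.map _).eq]
  exact (PosSemidef.posDef_iff_isUnit (.of_dotProduct_mulVec_nonneg hherm fun x => by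
    simpa using dotProduct_mulVec_nonneg_of_int hint x)).2 hunit

theorem exists_add_transpose_eq {B : Matrix (Fin n) (Fin n) ℤ} (hB : B.IsSymm)
    (hdiag : ∀ i, 2 ∣ B i i) : ∃ V : Matrix (Fin n) (Fin n) ℤ, V + Vᵀ = B := by
  choose c hc using hdiag
  refine ⟨.of fun i j => if i < j then B i j else if i = j then c i else 0, ?_⟩
  ext i j
  rcases lt_trichotomy i j with h | rfl | h
  · simp [h, h.not_gt, h.ne']
  · simp [hc, two_mul]
  · simp [h, h.not_gt, h.ne', hB.apply]

namespace PosForm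

theorem exists_isDual (Q : PosForm n) {N : ℕ} (hN : 0 < N) {B : Matrix (Fin n) (Fin n) ℤ}
    (hdiag : ∀ i, 2 ∣ B i i)
    (hB : (N : ℚ) • (Q.gram.map (Int.cast : ℤ → ℚ))⁻¹ = B.map (Int.cast : ℤ → ℚ)) :
    ∃ R, Q.IsDual R N := by
  have hinj : Function.Injective (Int.castRingHom ℚ).mapMatrix :=
    Matrix.map_injective (m := Fin n) (n := Fin n) Int.cast_injective
  have hdet : IsUnit (Q.gram.map (Int.cast : ℤ → ℚ)).det := by
    rw [← Int.cast_det Q.gram, isUnit_iff_ne_zero, Int.cast_ne_zero]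
    exact Q.det_gram_pos.ne'
  have hsymm : B.IsSymm := hinj <| by
    change (Bᵀ).map Int.cast = B.map (Int.cast : ℤ → ℚ)
    rw [transpose_map, ← hB, transpose_smul, transpose_nonsing_inv, (Q.isSymm_gram.map _).eq]
  have hmul : Q.gram * B = (N : ℤ) • 1 := hinj <| by
    rw [map_mul, map_zsmul, map_one, natCast_zsmul, ← Nat.cast_smul_eq_nsmul ℚ]
    change Q.gram.map Int.cast * B.map Int.cast = _
    rw [← hB, mul_smul_comm, mul_nonsing_inv _ hdet]
  have hreal : B.map (Int.cast : ℤ → ℝ) = (N : ℝ) • (Q.gram.map (Int.cast : ℤ → ℝ))⁻¹ := by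
    rw [inv_map_intCast_eq_smul hN.ne' hmul, smul_inv_smul₀ (Nat.cast_ne_zero.2 hN.ne')]
  obtain ⟨V, rfl⟩ := exists_add_transpose_eq hsymm hdiag
  refine ⟨⟨V, ?_⟩, hN, hmul⟩
  rw [hreal]
  exact Q.posDef_gram.inv.smul (by exact_mod_cast hN)

theorem exists_eval_eq_sum_of_pos {a : Fin n → Fin n → ℤ} {A : Matrix (Fin n) (Fin n) ℤ}
    (hA : ∀ i j, A i j = if i < j then a i j else if j < i then a j i else 2 * a i i)
    {q : (Fin n → ℤ) → ℤ}
    (hq : ∀ x, q x = ∑ i, ∑ j, if i ≤ j then a i j * x i * x j else 0)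
    (hpos : ∀ x : Fin n → ℤ, x ≠ 0 → 0 < q x) :
    ∃ Q : PosForm n, Q.gram = A ∧ ∀ x, Q.eval x = q x := by
  set U : Matrix (Fin n) (Fin n) ℤ := .of fun i j => if i ≤ j then a i j else 0 with hU
  have hgram : U + Uᵀ = A := by
    ext i j
    rw [hA]
    rcases lt_trichotomy i j with h | rfl | h
    · simp [hU, h, h.le, h.not_ge]
    · simp [hU, two_mul]
    · simp [hU, h, h.le, h.not_ge, h.not_gt]
  have hform (x : Fin n → ℤ) : x ⬝ᵥ U *ᵥ x = q x := by
    rw [hq, dotProduct]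
    refine Finset.sum_congr rfl fun i _ => ?_
    rw [mulVec, dotProduct, Finset.mul_sum]
    refine Finset.sum_congr rfl fun j _ => ?_
    simp only [hU, of_apply, ite_mul, mul_ite, zero_mul, mul_zero]
    ring_nf
  have htwo (x : Fin n → ℤ) : x ⬝ᵥ (U + Uᵀ) *ᵥ x = 2 * q x := by
    rw [add_mulVec, dotProduct_add, mulVec_transpose, dotProduct_comm x (x ᵥ* U),
      ← dotProduct_mulVec, hform, two_mul]
  refine ⟨⟨U, posDef_map_intCast (isSymm_add_transpose_self U) fun x hx => ?_⟩, hgram, fun x => ?_⟩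
  · rw [htwo]
    linarith [hpos x hx]
  · rw [← hform, eval, show U.map (Int.cast : ℤ → ℤ) = U from U.map_id]

end PosForm

end IntegralMatrices

section ModularForm

theorem coe_smul_eq (γ : SL(2, ℤ)) (τ : ℍ) :
    ((γ • τ : ℍ) : ℂ) = (((γ : Matrix (Fin 2) (Fin 2) ℤ) 0 0 : ℂ) * τ +
      (γ : Matrix (Fin 2) (Fin 2) ℤ) 0 1) /
      ((γ : Matrix (Fin 2) (Fin 2) ℤ) 1 0 * τ + (γ : Matrix (Fin 2) (Fin 2) ℤ) 1 1) := by
  rw [coe_specialLinearGroup_apply]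
  simp

theorem det_eq_sub (γ : SL(2, ℤ)) :
    (γ : Matrix (Fin 2) (Fin 2) ℤ) 0 0 * (γ : Matrix (Fin 2) (Fin 2) ℤ) 1 1 -
      (γ : Matrix (Fin 2) (Fin 2) ℤ) 0 1 * (γ : Matrix (Fin 2) (Fin 2) ℤ) 1 0 = 1 := by
  rw [← det_fin_two, γ.det_coe]

namespace PosForm

variable {n : ℕ} {Q R : PosForm n} {N ν m : ℕ} {p p' : (Fin n → ℤ) → ℂ}

theorem theta_indicator_coset_eq_tsum_subtype (u : Fin n → ℤ) (z : ℂ) :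
    Q.theta ((coset u m).indicator p) z =
      ∑' x : coset u m, p x * cexp (2 * π * Complex.I * Q.eval (x : Fin n → ℤ) * z) := by
  rw [tsum_subtype (coset u m) fun x => p x * cexp (2 * π * Complex.I * Q.eval x * z), theta]
  refine tsum_congr fun x => ?_
  rw [expTwoPi, ← mul_assoc (2 * π * Complex.I), Set.indicator_mul_left]

theorem mdifferentiable_theta (hp : HasExpGrowth p) :
    MDifferentiable 𝓘(ℂ) 𝓘(ℂ) fun τ : ℍ => Q.theta p τ := by
  rw [UpperHalfPlane.mdifferentiable_iff]
  refine (Q.differentiableOn_theta hp).congr fun τ hτ => ?_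
  rw [Function.comp_apply, ofComplex_apply_of_im_pos hτ]

theorem IsPoissonDual.theta_smul (hn : Even n) (hR : Q.IsDual R N)
    (h : Q.IsPoissonDual R N ν p p') (hp : ∀ x, p (-x) = (-1) ^ ν * p x) (hm : m ≠ 0)
    (u : Fin n → ℤ) {γ : SL(2, ℤ)} (hγ : γ ∈ Gamma0 (m ^ 2 * N) ⊓ Gamma1 m) (τ : ℍ) :
    Q.theta ((coset u m).indicator p) (γ • τ : ℍ) =
      kronecker Q.disc ((γ : Matrix (Fin 2) (Fin 2) ℤ) 1 1) *
        ((γ : Matrix (Fin 2) (Fin 2) ℤ) 1 0 * τ + (γ : Matrix (Fin 2) (Fin 2) ℤ) 1 1) ^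
          (n / 2 + ν) * Q.theta ((coset u m).indicator p) τ := by
  obtain ⟨h0, h1⟩ := Subgroup.mem_inf.1 hγ
  rw [Gamma0_mem, ZMod.intCast_zmod_eq_zero_iff_dvd] at h0
  rw [coe_smul_eq]
  refine h.theta_modular hn hR hp hm u (det_eq_sub γ) (by exact_mod_cast h0) ?_ τ.im_pos
  rw [← ZMod.intCast_eq_intCast_iff, ((Gamma1_mem m γ).1 h1).1, Int.cast_one]

theorem IsPoissonDual.exists_tendsto_smul (hR : Q.IsDual R N) (h : Q.IsPoissonDual R N ν p p')
    (hm : m ≠ 0) (u : Fin n → ℤ) (γ : SL(2, ℤ)) :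
    ∃ L, Tendsto (fun τ : ℍ => ((γ : Matrix (Fin 2) (Fin 2) ℤ) 1 0 * (τ : ℂ) +
        (γ : Matrix (Fin 2) (Fin 2) ℤ) 1 1) ^ (-((n / 2 + ν : ℕ) : ℤ)) *
          Q.theta ((coset u m).indicator p) (γ • τ : ℍ)) atImInfty (nhds L) ∧
      (p 0 = 0 → p' 0 = 0 → L = 0) := by
  obtain ⟨L, hL, h0⟩ := h.exists_tendsto hR hm u (det_eq_sub γ)
  refine ⟨L, ?_, h0⟩
  simp only [coe_smul_eq]
  exact hL.comp (tendsto_comap_iff.2 tendsto_comap)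

end PosForm

end ModularForm

/-- **Theorem 1.**  Let `Q(x) = ∑_{i ≤ j} a_{ij} x_i x_j` (`n` even) be a positive-definite
integral quadratic form with coefficient matrix `A_Q`, discriminant `D_Q`, level `N_Q`, and let
`P` be a spherical function of degree `ν` with respect to `A_Q`.  For every `m ≥ 1` and
`u ∈ ℤⁿ`, the function `f(τ) = ∑_{x ≡ u (mod m)} P(x) q^{Q(x)}` is a modular form of weight
`n/2 + ν` for `Γ₀(m²N_Q) ∩ Γ₁(m)` with nebentypus the Kronecker symbol `(D_Q/·)`; moreover it
is a cusp form whenever `ν ≥ 1`. -/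
theorem theta_with_congruence_is_modular (n : ℕ) (hn : 0 < n) (hne : Even n)
    (a : Fin n → Fin n → ℤ)
    (Q : (Fin n → ℤ) → ℤ)
    (hQ : ∀ x, Q x = ∑ i, ∑ j, if i ≤ j then a i j * x i * x j else 0)
    (A : Matrix (Fin n) (Fin n) ℤ)
    (hA : ∀ i j, A i j = if i < j then a i j else if j < i then a j i else 2 * a i i)
    (hpos : ∀ x : Fin n → ℤ, x ≠ 0 → 0 < Q x)
    (D : ℤ) (hD : D = (-1) ^ (n / 2) * A.det)
    (NQ : ℕ)
    (hNQ : IsLeast {N : ℕ | 0 < N ∧ ∃ B : Matrix (Fin n) (Fin n) ℤ, (∀ i, 2 ∣ B i i) ∧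
        (N : ℚ) • (A.map (Int.cast : ℤ → ℚ))⁻¹ = B.map (Int.cast : ℤ → ℚ)} NQ)
    (ν : ℕ) (P : (Fin n → ℤ) → ℂ) (hP : IsSpherical A ν P)
    (m : ℕ) (hm : 0 < m) (u : Fin n → ℤ)
    (f : ℍ → ℂ)
    (hf : ∀ τ : ℍ, f τ = ∑' x : {x : Fin n → ℤ // ∀ i, (m : ℤ) ∣ (x i - u i)},
        P x * Complex.exp (2 * (Real.pi : ℂ) * Complex.I * (Q x : ℂ) * (τ : ℂ))) :
    MDifferentiable 𝓘(ℂ) 𝓘(ℂ) f ∧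
    (∀ γ ∈ Gamma0 (m ^ 2 * NQ) ⊓ Gamma1 m, ∀ τ : ℍ,
        f (γ • τ) = (kronecker D ((γ : Matrix (Fin 2) (Fin 2) ℤ) 1 1) : ℂ) *
          (((γ : Matrix (Fin 2) (Fin 2) ℤ) 1 0 : ℂ) * (τ : ℂ) +
              ((γ : Matrix (Fin 2) (Fin 2) ℤ) 1 1 : ℂ)) ^ (n / 2 + ν) * f τ) ∧
    (∀ γ : SL(2, ℤ), IsBoundedAtImInfty (fun τ : ℍ =>
        (((γ : Matrix (Fin 2) (Fin 2) ℤ) 1 0 : ℂ) * (τ : ℂ) +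
            ((γ : Matrix (Fin 2) (Fin 2) ℤ) 1 1 : ℂ)) ^ (-((n / 2 + ν : ℕ) : ℤ)) *
          f (γ • τ))) ∧
    (1 ≤ ν → ∀ γ : SL(2, ℤ), IsZeroAtImInfty (fun τ : ℍ =>
        (((γ : Matrix (Fin 2) (Fin 2) ℤ) 1 0 : ℂ) * (τ : ℂ) +
            ((γ : Matrix (Fin 2) (Fin 2) ℤ) 1 1 : ℂ)) ^ (-((n / 2 + ν : ℕ) : ℤ)) *
          f (γ • τ))) := by
  obtain ⟨S, rfl, hS⟩ := PosForm.exists_eval_eq_sum_of_pos hA hQ hpos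
  obtain ⟨hN, B, hdiag, hB⟩ := hNQ.1
  obtain ⟨R, hR⟩ := S.exists_isDual hN hdiag hB
  obtain ⟨P', hP', hP'0⟩ := IsSpherical.exists_isPoissonDual hne hR hP
  have hcusp := hP'.exists_tendsto_smul hR hm.ne' u
  obtain rfl : D = S.disc := hD
  obtain rfl : f = fun τ : ℍ => S.theta ((coset u m).indicator P) τ := funext fun τ => by
    simp only [hf, PosForm.theta_indicator_coset_eq_tsum_subtype, hS]
    rfl
  refine ⟨PosForm.mdifferentiable_theta (hP'.hasExpGrowth.indicator _),
    fun γ hγ τ => hP'.theta_smul hne hR hP.map_neg hm.ne' u hγ τ, fun γ => ?_, fun hν γ => ?_⟩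
  · obtain ⟨L, hL, -⟩ := hcusp γ
    exact hL.isBigO_one ℝ
  · obtain ⟨L, hL, hL0⟩ := hcusp γ
    have hν0 := Nat.one_le_iff_ne_zero.1 hν
    rwa [hL0 (hP.map_zero hν0) (hP'0 hν0)] at hL
end

section
/- Let n be an even positive integer and let A be an n×n positive-definite symmetric integer matrix with even diagonal entries, with discriminant D = (−1)^{n/2} det(A). Then the level of A, i.e. the smallest positive integer N such that N·A^{−1} is an integer matrix with even diagonal entries, is given by N = |D| / g, where g = gcd of the set consisting of all off-diagonal cofactors c_{ij} (i ≠ j) of A together with the halves c_{ii}/2 of the diagonal cofactors of A. -/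
open Matrix

/-- The `(i, j)` cofactor of a square matrix: `(-1)^(i+j)` times the minor obtained by
deleting row `i` and column `j`.  Equivalently, the determinant of the matrix obtained
by replacing row `i` with the standard basis vector `e_j`. -/
def cofactor {n : ℕ} (A : Matrix (Fin n) (Fin n) ℤ) (i j : Fin n) : ℤ :=
  (A.updateRow i (Pi.single j 1)).det

/-!
Since `A⁻¹ = (det A)⁻¹ • adj A`, the matrix `N • A⁻¹` is integral with even diagonal iff
`N • adj A` is `det A` times such a matrix. When `adj A` itself has even diagonal, this means that
`det A` divides `N * g`, where `g` is the gcd of the off-diagonal entries and the half diagonal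
entries of `adj A`; as `g ∣ det A`, the least such `N > 0` is `|det A| / g`.

The diagonal of `adj A` is even because an even symmetric `A` is `T + Tᵀ`, which is congruent
modulo `2` to the skew-symmetric matrix `T - Tᵀ`, whose adjugate is skew-symmetric in even size.
-/

/-- The gcd of the off-diagonal entries and the halves of the diagonal entries of an integer matrix.
For symmetric `M` this is the content of the quadratic form `xᵀMx / 2`. The halves are integer
divisions, hence only meaningful if `M` has even diagonal. -/
def evenContent {ι : Type*} [Fintype ι] [DecidableEq ι] (M : Matrix ι ι ℤ) : ℤ :=
  Finset.univ.gcd fun p : ι × ι => if p.1 = p.2 then M p.1 p.1 / 2 else M p.1 p.2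

section EvenDiagonal

variable {ι : Type*} [Fintype ι] [DecidableEq ι] {M : Matrix ι ι ℤ}

lemma evenContent_nonneg (M : Matrix ι ι ℤ) : 0 ≤ evenContent M :=
  Int.nonneg_of_normalize_eq_self Finset.normalize_gcd

lemma evenContent_smul (hM : ∀ i, 2 ∣ M i i) (a : ℤ) :
    evenContent (a • M) = |a| * evenContent M := by
  rw [Int.abs_eq_normalize, evenContent, evenContent, ← Finset.gcd_mul_left]
  refine Finset.gcd_congr rfl fun p _ => ?_
  simp only [Matrix.smul_apply, smul_eq_mul, Int.mul_ediv_assoc a (hM p.1), mul_ite]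

lemma dvd_evenContent_iff (hM : ∀ i, 2 ∣ M i i) (d : ℤ) :
    d ∣ evenContent M ↔ ∃ B : Matrix ι ι ℤ, (∀ i, 2 ∣ B i i) ∧ M = d • B := by
  simp only [evenContent, Finset.dvd_gcd_iff, Finset.mem_univ, true_imp_iff, Prod.forall]
  constructor
  · intro h
    choose C hC using h
    refine ⟨of fun i j => if i = j then 2 * C i j else C i j, fun i => by simp, ?_⟩
    ext i j
    have hCij := hC i j
    by_cases hij : i = j
    · subst hij
      have hhalf := Int.mul_ediv_cancel' (hM i)
      simp only [if_true] at hCij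
      simp only [Matrix.smul_apply, of_apply, if_true, smul_eq_mul]
      linear_combination 2 * hCij - hhalf
    · simpa [hij] using hCij
  · rintro ⟨B, hB, rfl⟩ i j
    split_ifs
    · exact ⟨B i i / 2, Int.mul_ediv_assoc d (hB i)⟩
    · exact ⟨B i j, rfl⟩

lemma evenContent_adjugate_dvd_det [Nonempty ι] {A : Matrix ι ι ℤ}
    (hadj : ∀ i, 2 ∣ A.adjugate i i) : evenContent A.adjugate ∣ A.det := by
  obtain ⟨B, -, hB⟩ := (dvd_evenContent_iff hadj _).1 dvd_rfl
  have hdet : evenContent A.adjugate • (A * B) = A.det • 1 := by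
    rw [← Matrix.mul_smul, ← hB, mul_adjugate]
  obtain ⟨i⟩ := ‹Nonempty ι›
  exact ⟨(A * B) i i, by simpa using (congrFun₂ hdet i i).symm⟩

end EvenDiagonal

section Skew

variable {ι : Type*}

lemma exists_eq_add_transpose_of_even_diag {A : Matrix ι ι ℤ} (hsymm : A.IsSymm)
    (heven : ∀ i, 2 ∣ A i i) : ∃ T : Matrix ι ι ℤ, A = T + Tᵀ := by
  classical
  let := linearOrderOfSTO (WellOrderingRel (α := ι))
  refine ⟨of fun i j => if i < j then A i j else if i = j then A i i / 2 else 0, ?_⟩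
  ext i j
  rcases lt_trichotomy i j with h | rfl | h
  · simp [h, h.not_gt, h.ne']
  · have := heven i
    simp only [Matrix.add_apply, transpose_apply, of_apply, lt_irrefl, if_true, if_false]
    omega
  · simp [h, h.not_gt, h.ne', hsymm.apply i j]

variable [Fintype ι] [DecidableEq ι]

lemma adjugate_transpose_eq_neg {R : Type*} [CommRing R] {S : Matrix ι ι R} (hS : Sᵀ = -S)
    (hcard : Even (Fintype.card ι)) : S.adjugateᵀ = -S.adjugate := by
  cases isEmpty_or_nonempty ι
  · exact Subsingleton.elim _ _
  · have hodd : Odd (Fintype.card ι - 1) :=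
      Nat.Even.sub_odd Fintype.card_pos hcard odd_one
    rw [adjugate_transpose, hS, ← neg_one_smul R S, adjugate_smul, hodd.neg_one_pow, neg_one_smul]

lemma two_dvd_adjugate_diag {A : Matrix ι ι ℤ} (hcard : Even (Fintype.card ι)) (hsymm : A.IsSymm)
    (heven : ∀ i, 2 ∣ A i i) (i : ι) : 2 ∣ A.adjugate i i := by
  obtain ⟨T, rfl⟩ := exists_eq_add_transpose_of_even_diag hsymm heven
  have hskew : (T - Tᵀ)ᵀ = -(T - Tᵀ) := by
    rw [transpose_sub, transpose_transpose, neg_sub]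
  have hzero : (T - Tᵀ).adjugate i i = 0 :=
    self_eq_neg.1 (congrFun₂ (adjugate_transpose_eq_neg hskew hcard) i i)
  let φ := (Int.castRingHom (ZMod 2)).mapMatrix (m := ι)
  have hmod : φ (T - Tᵀ) = φ (T + Tᵀ) := by
    ext a b
    simp [φ, CharTwo.sub_eq_add]
  have hadj : φ (T - Tᵀ).adjugate = φ (T + Tᵀ).adjugate := by
    rw [RingHom.map_adjugate, RingHom.map_adjugate, hmod]
  have hadj_diag : (((T - Tᵀ).adjugate i i : ℤ) : ZMod 2) = ((T + Tᵀ).adjugate i i : ℤ) :=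
    congrFun₂ hadj i i
  rw [hzero, Int.cast_zero] at hadj_diag
  exact (ZMod.intCast_zmod_eq_zero_iff_dvd _ 2).1 hadj_diag.symm

end Skew

section Level

variable {ι : Type*} [Fintype ι] [DecidableEq ι]

lemma smul_inv_map_eq_map_iff {R K : Type*} [CommRing R] [Field K] {f : R →+* K}
    (hf : Function.Injective f) {A : Matrix ι ι R} (hdet : A.det ≠ 0) (B : Matrix ι ι R) (r : R) :
    f r • (A.map f)⁻¹ = B.map f ↔ r • A.adjugate = A.det • B := by
  have hfdet : f A.det ≠ 0 := (map_ne_zero_iff f hf).2 hdet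
  have hinv : (A.map f)⁻¹ = (f A.det)⁻¹ • A.adjugate.map f := by
    rw [inv_def, Ring.inverse_eq_inv', ← RingHom.mapMatrix_apply, ← RingHom.map_det,
      ← RingHom.map_adjugate, RingHom.mapMatrix_apply]
  have hmap (a : R) (M : Matrix ι ι R) : f a • M.map f = (a • M).map f := by
    ext i j
    simp
  rw [hinv, smul_comm, inv_smul_eq_iff₀ hfdet, hmap, hmap, (map_injective hf).eq_iff]

lemma exists_smul_inv_eq_iff_det_dvd {A : Matrix ι ι ℤ} (hdet : A.det ≠ 0)
    (hadj : ∀ i, 2 ∣ A.adjugate i i) (N : ℤ) :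
    (∃ B : Matrix ι ι ℤ, (∀ i, 2 ∣ B i i) ∧
        (N : ℚ) • (A.map (Int.cast : ℤ → ℚ))⁻¹ = B.map (Int.cast : ℤ → ℚ)) ↔
      A.det ∣ N * evenContent A.adjugate := by
  have hclear (B : Matrix ι ι ℤ) :
      (N : ℚ) • (A.map (Int.cast : ℤ → ℚ))⁻¹ = B.map (Int.cast : ℤ → ℚ) ↔
        N • A.adjugate = A.det • B :=
    smul_inv_map_eq_map_iff (f := Int.castRingHom ℚ) Int.cast_injective hdet B N
  have heven : ∀ i, 2 ∣ (N • A.adjugate) i i := fun i => (hadj i).mul_left N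
  have habs : |N| * evenContent A.adjugate = |N * evenContent A.adjugate| := by
    rw [abs_mul, abs_of_nonneg (evenContent_nonneg _)]
  simp only [hclear]
  rw [← dvd_evenContent_iff heven, evenContent_smul hadj, habs, dvd_abs]

lemma isLeast_pos_dvd_mul {d g : ℤ} (hd : d ≠ 0) (hg : 0 ≤ g) (hgd : g ∣ d) :
    IsLeast {N : ℤ | 0 < N ∧ d ∣ N * g} (|d| / g) := by
  obtain ⟨k, rfl⟩ := hgd
  have hg0 : g ≠ 0 := left_ne_zero_of_mul hd
  have hk : k ≠ 0 := right_ne_zero_of_mul hd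
  rw [abs_mul, abs_of_nonneg hg, Int.mul_ediv_cancel_left _ hg0]
  simp only [mul_comm g k, mul_dvd_mul_iff_right hg0]
  exact ⟨⟨abs_pos.2 hk, (dvd_abs k k).2 dvd_rfl⟩,
    fun N hN => Int.le_of_dvd hN.1 ((abs_dvd k N).2 hN.2)⟩

theorem isLeast_det_div_evenContent_adjugate [Nonempty ι] {A : Matrix ι ι ℤ} (hdet : A.det ≠ 0)
    (hadj : ∀ i, 2 ∣ A.adjugate i i) :
    IsLeast {N : ℤ | 0 < N ∧ ∃ B : Matrix ι ι ℤ, (∀ i, 2 ∣ B i i) ∧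
        (N : ℚ) • (A.map (Int.cast : ℤ → ℚ))⁻¹ = B.map (Int.cast : ℤ → ℚ)}
      (|A.det| / evenContent A.adjugate) := by
  simp only [exists_smul_inv_eq_iff_det_dvd hdet hadj]
  exact isLeast_pos_dvd_mul hdet (evenContent_nonneg _) (evenContent_adjugate_dvd_det hadj)

end Level

lemma det_ne_zero_of_dotProduct_mulVec_pos_s2 {ι R : Type*} [Fintype ι] [DecidableEq ι] [CommRing R]
    [IsDomain R] [Preorder R] {A : Matrix ι ι R} (hpos : ∀ x : ι → R, x ≠ 0 → 0 < x ⬝ᵥ A.mulVec x) :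
    A.det ≠ 0 := by
  intro hdet
  obtain ⟨x, hx, hAx⟩ := exists_mulVec_eq_zero_iff.2 hdet
  simpa [hAx] using hpos x hx

lemma of_cofactor_eq_adjugate {n : ℕ} {A : Matrix (Fin n) (Fin n) ℤ} (hsymm : A.IsSymm) :
    of (cofactor A) = A.adjugate := by
  ext i j
  rw [of_apply, cofactor, ← adjugate_apply, hsymm.adjugate.apply]

theorem level_eq_discriminant_div_gcd_cofactors_general (n : ℕ) (hn : 0 < n) (hne : Even n)
    (A : Matrix (Fin n) (Fin n) ℤ) (hsymm : A.IsSymm) (heven : ∀ i, 2 ∣ A i i)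
    (hdet : A.det ≠ 0)
    (D : ℤ) (hD : D = (-1) ^ (n / 2) * A.det)
    (g : ℤ)
    (hg : g = Finset.gcd Finset.univ (fun p : Fin n × Fin n =>
        if p.1 = p.2 then cofactor A p.1 p.1 / 2 else cofactor A p.1 p.2)) :
    IsLeast {N : ℤ | 0 < N ∧ ∃ B : Matrix (Fin n) (Fin n) ℤ, (∀ i, 2 ∣ B i i) ∧
        (N : ℚ) • (A.map (Int.cast : ℤ → ℚ))⁻¹ = B.map (Int.cast : ℤ → ℚ)}
      (|D| / g) := by
  have : Nonempty (Fin n) := ⟨⟨0, hn⟩⟩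
  have habs : |D| = |A.det| := by
    rw [hD, abs_mul, abs_neg_one_pow, one_mul]
  have hcontent : g = evenContent A.adjugate := by
    rw [← of_cofactor_eq_adjugate hsymm]
    exact hg
  have hadj : ∀ i, 2 ∣ A.adjugate i i :=
    two_dvd_adjugate_diag (by rwa [Fintype.card_fin]) hsymm heven
  rw [habs, hcontent]
  exact isLeast_det_div_evenContent_adjugate hdet hadj

/-- **Level of an even positive-definite matrix** (Proposition 1 / Statement 2).
Let `n` be an even positive integer and `A` an `n × n` positive-definite symmetric integer
matrix with even diagonal.  With `D = (-1)^(n/2) det A` and `g` the gcd of all off-diagonal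
cofactors together with the halves of the diagonal cofactors, the smallest positive integer
`N` such that `N • A⁻¹` is an integer matrix with even diagonal is `N = |D| / g`. -/
theorem level_eq_discriminant_div_gcd_cofactors (n : ℕ) (hn : 0 < n) (hne : Even n)
    (A : Matrix (Fin n) (Fin n) ℤ) (hsymm : A.IsSymm) (heven : ∀ i, 2 ∣ A i i)
    (hpos : ∀ x : Fin n → ℤ, x ≠ 0 → 0 < x ⬝ᵥ A.mulVec x)
    (D : ℤ) (hD : D = (-1) ^ (n / 2) * A.det)
    (g : ℤ)
    (hg : g = Finset.gcd Finset.univ (fun p : Fin n × Fin n =>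
        if p.1 = p.2 then cofactor A p.1 p.1 / 2 else cofactor A p.1 p.2)) :
    IsLeast {N : ℤ | 0 < N ∧ ∃ B : Matrix (Fin n) (Fin n) ℤ, (∀ i, 2 ∣ B i i) ∧
        (N : ℚ) • (A.map (Int.cast : ℤ → ℚ))⁻¹ = B.map (Int.cast : ℤ → ℚ)}
      (|D| / g) :=
  level_eq_discriminant_div_gcd_cofactors_general n hn hne A hsymm heven
    (det_ne_zero_of_dotProduct_mulVec_pos_s2 hpos) D hD g hg
end
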